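/- arXiv:2203.12492 — 2 statements merged into one kernel-verified Lean document; each statement's English description precedes it below -/
import Mathlib

section
/- Let λ be a strict partition with d parts, N = |λ|, and fix i ∈ {1,…,d} such that either i = 1 or λ_{i−1} ≥ λ_i + 3. Let λ^# be the strict partition obtained from λ by replacing λ_i with λ_i + 1, and let j = λ_i + i − d, so that D(λ^#) ∖ D(λ) = {(i,j)}; under the hypothesis, columns j and j+1 of D(λ) each consist exactly of the boxes in rows 1, …, i−1. For B ∈ BS(λ), define the filling B^# of D(λ^#) by: B^#(a,j) = B(a,j+1) and B^#(a,j+1) = B(a,j) for all 1 ≤ a ≤ i−1; B^#(i,j) = N+1; and B^# = B on all other boxes. Then B^# is a balanced shifted tableau of shape λ^#, and the map f_i : B ↦ B^# is a bijection from BS(λ) onto {T ∈ BS(λ^#) : T(i,j) = N+1}. -/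
open scoped BigOperators

namespace BST

/-- `lam` (1-indexed, with `d` parts) is a strict partition: strictly decreasing
positive parts `lam 1 > lam 2 > ⋯ > lam d > 0`. -/
def IsStrictPartition (d : ℕ) (lam : ℕ → ℕ) : Prop :=
  (∀ i : ℕ, 1 ≤ i → i < d → lam (i + 1) < lam i) ∧ 1 ≤ lam d

/-- The size `|λ| = λ_1 + ⋯ + λ_d`. -/
def sizeP (d : ℕ) (lam : ℕ → ℕ) : ℕ := ∑ i ∈ Finset.Icc 1 d, lam i

/-- The shifted diagram `D(λ) ⊆ ℤ × ℤ`: row `i` (1 ≤ i ≤ d) occupies columns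
`i - d, …, λ_i + i - d - 1`. -/
def Diagram (d : ℕ) (lam : ℕ → ℕ) : Set (ℤ × ℤ) :=
  {p : ℤ × ℤ | 1 ≤ p.1 ∧ p.1 ≤ (d : ℤ) ∧ p.1 - (d : ℤ) ≤ p.2 ∧
    p.2 + (d : ℤ) + 1 ≤ (lam p.1.toNat : ℤ) + p.1}

/-- The hook `H(i,c)`. -/
def Hook (d : ℕ) (lam : ℕ → ℕ) (i c : ℤ) : Set (ℤ × ℤ) :=
  {(i, c)} ∪ {p ∈ Diagram d lam | (p.1 = i ∧ c < p.2) ∨ (p.2 = c ∧ i < p.1)} ∪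
    {p ∈ Diagram d lam | c < 0 ∧ p.1 = (d : ℤ) + 1 + c}

/-- The extended hook `H̃(i,c)`. -/
def ExtHook (d : ℕ) (lam : ℕ → ℕ) (i c : ℤ) : Set (ℤ × ℤ) :=
  Hook d lam i c ∪ {p : ℤ × ℤ | c < 0 ∧ p = ((d : ℤ) + 1 + c, c)}

/-- The extended diagram `D(λ) ∪ {(i, i - d - 1) : 1 ≤ i ≤ d}`. -/
def ExtDiagram (d : ℕ) (lam : ℕ → ℕ) : Set (ℤ × ℤ) :=
  Diagram d lam ∪ {p : ℤ × ℤ | 1 ≤ p.1 ∧ p.1 ≤ (d : ℤ) ∧ p.2 = p.1 - ((d : ℤ) + 1)}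

/-- The extended filling `B̃`, with `B̃(i, i - d - 1) = B(i, 0)`. -/
def ExtFilling (d : ℕ) (B : ℤ × ℤ → ℕ) : ℤ × ℤ → ℕ :=
  fun p => if p.2 = p.1 - ((d : ℤ) + 1) then B (p.1, 0) else B p

/-- The rank function `rk(i,c)`. -/
def rk (d : ℕ) (lam : ℕ → ℕ) (i c : ℤ) : ℤ :=
  if 0 ≤ c then (lam i.toNat : ℤ) - d + i - c
  else (lam i.toNat : ℤ) - d + i + (lam ((d : ℤ) + 1 + c).toNat : ℤ) + c + 1

/-- A bijective filling of `D(λ)` with `1, …, |λ|` (normalized to be `0` off the diagram). -/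
def IsFilling (d : ℕ) (lam : ℕ → ℕ) (B : ℤ × ℤ → ℕ) : Prop :=
  Set.BijOn B (Diagram d lam) (Set.Icc 1 (sizeP d lam)) ∧
    ∀ p : ℤ × ℤ, p ∉ Diagram d lam → B p = 0

/-- A balanced shifted tableau: a bijective filling such that at each box `(i,c)`,
`B(i,c)` is the `rk(i,c)`-th largest entry of the multiset of values of `B̃` on the
extended hook, i.e. exactly `rk(i,c) - 1` boxes of the extended hook carry a value
strictly larger than `B(i,c)`. -/
def IsBalanced (d : ℕ) (lam : ℕ → ℕ) (B : ℤ × ℤ → ℕ) : Prop :=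
  IsFilling d lam B ∧ ∀ p ∈ Diagram d lam,
    ({q ∈ ExtHook d lam p.1 p.2 | B p < ExtFilling d B q}.ncard : ℤ) =
      rk d lam p.1 p.2 - 1

/-- A standard Young tableau of shifted shape `λ`. -/
def IsSYT (d : ℕ) (lam : ℕ → ℕ) (B : ℤ × ℤ → ℕ) : Prop :=
  IsFilling d lam B ∧ ∀ p ∈ Diagram d lam, ∀ q ∈ Diagram d lam,
    ((p.1 = q.1 ∧ p.2 < q.2) → B p < B q) ∧ ((p.2 = q.2 ∧ p.1 < q.1) → B p < B q)

/-- The simple reflections of `W(B_n)`, acting on `ℤ`: `s 0` swaps `1 ↔ -1`,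
and `s a` (for `a ≥ 1`) swaps `a ↔ a+1` and `-a ↔ -(a+1)`. -/
def sB (a : ℕ) : Equiv.Perm ℤ :=
  if a = 0 then Equiv.swap 1 (-1)
  else Equiv.swap (a : ℤ) ((a : ℤ) + 1) * Equiv.swap (-(a : ℤ)) (-(a : ℤ) - 1)

/-- The product `s_{a_1} s_{a_2} ⋯ s_{a_m}` of a word. -/
def wordProd (L : List ℕ) : Equiv.Perm ℤ := (L.map sB).prod

/-- A signed permutation in `W(B_n)`: odd, and the identity beyond `n`. -/
def IsSignedPerm (n : ℕ) (w : Equiv.Perm ℤ) : Prop :=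
  (∀ i : ℤ, w (-i) = -(w i)) ∧ ∀ i : ℤ, (n : ℤ) < |i| → w i = i

/-- The Coxeter length of `w` in `W(B_n)`. -/
noncomputable def lengthB (n : ℕ) (w : Equiv.Perm ℤ) : ℕ :=
  sInf {m : ℕ | ∃ L : List ℕ, (∀ a ∈ L, a < n) ∧ wordProd L = w ∧ L.length = m}

/-- `L` is a reduced word of `w` in `W(B_n)`. -/
def IsReducedWord (n : ℕ) (w : Equiv.Perm ℤ) (L : List ℕ) : Prop :=
  (∀ a ∈ L, a < n) ∧ wordProd L = w ∧ L.length = lengthB n w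

/-- The vector `e_k` (for `k ≥ 1` the `k`-th standard basis vector, with the
conventions `e 0 = 0` and `e (-k) = - e k`), represented as an odd function `ℤ → ℤ`. -/
def eVec (k : ℤ) : ℤ → ℤ :=
  fun t => if t = 0 then 0 else if t = k then 1 else if t = -k then -1 else 0

/-- The positive roots of type `B_n`. -/
def PosRoots (n : ℕ) : Set (ℤ → ℤ) :=
  {v | (∃ i j : ℤ, 1 ≤ i ∧ i < j ∧ j ≤ (n : ℤ) ∧
        (v = eVec j - eVec i ∨ v = eVec j + eVec i)) ∨
       (∃ i : ℤ, 1 ≤ i ∧ i ≤ (n : ℤ) ∧ v = eVec i)}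

/-- The action of a signed permutation on vectors: `w · e_i = e_{w(i)}`. -/
def actB (w : Equiv.Perm ℤ) (v : ℤ → ℤ) : ℤ → ℤ := fun t => v (w⁻¹ t)

/-- The inversion set `Inv(w) = {α ∈ Φ⁺ : w⁻¹ · α ∈ -Φ⁺}`. -/
def InvSet (n : ℕ) (w : Equiv.Perm ℤ) : Set (ℤ → ℤ) :=
  {α | α ∈ PosRoots n ∧ -(actB w⁻¹ α) ∈ PosRoots n}

/-- The simple roots: `α_0 = e_1` and `α_a = e_{a+1} - e_a` for `a ≥ 1`. -/
def alphaRoot (a : ℕ) : ℤ → ℤ :=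
  if a = 0 then eVec 1 else eVec ((a : ℤ) + 1) - eVec (a : ℤ)

/-- The reflection order of a word: `reflOrder L t = γ_{t+1} = s_{a_1} ⋯ s_{a_t} · α_{a_{t+1}}`
(0-indexed). -/
def reflOrder (L : List ℕ) (t : ℕ) : ℤ → ℤ :=
  actB (wordProd (L.take t)) (alphaRoot (L.getD t 0))

/-- The trapezoid `Z(d,r) = (r+2d-1, r+2d-3, …, r+1)`. -/
def Zlam (d r : ℕ) : ℕ → ℕ := fun i => r + 2 * d + 1 - 2 * i

/-- The labeling `f : D(Z(d,r)) → Φ⁺`. -/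
def fLabel (d r : ℕ) (p : ℤ × ℤ) : ℤ → ℤ :=
  if p.2 ≤ 0 then eVec ((d : ℤ) + 1 - p.1) - eVec p.2
  else if p.2 ≤ (r : ℤ) then eVec ((d : ℤ) + 1 - p.1) + eVec (p.2 + (d : ℤ))
  else eVec ((d : ℤ) + 1 - p.1) - eVec (p.2 - (r : ℤ))

/-- The extended labeling `f̃`, with `f̃(i, i - d - 1) = 2 e_{d+1-i}`. -/
def fExtLabel (d r : ℕ) (p : ℤ × ℤ) : ℤ → ℤ :=
  if p.2 = p.1 - ((d : ℤ) + 1) then (2 : ℤ) • eVec ((d : ℤ) + 1 - p.1)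
  else fLabel d r p

/-- `w` is the signed permutation `w^{(d,r)} ∈ W(B_{d+r})`, i.e.
`w(i) = d + i` for `1 ≤ i ≤ r` and `w(i) = -(i - r)` for `r < i ≤ d + r`. -/
def IsWdr (d r : ℕ) (w : Equiv.Perm ℤ) : Prop :=
  IsSignedPerm (d + r) w ∧
    (∀ i : ℤ, 1 ≤ i → i ≤ (r : ℤ) → w i = (d : ℤ) + i) ∧
    (∀ i : ℤ, (r : ℤ) < i → i ≤ (d : ℤ) + (r : ℤ) → w i = -(i - r))


/-- `x` lies strictly between `y` and `z` (i.e. `min(y,z) < x < max(y,z)`). -/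
def Between (x y z : ℕ) : Prop := (y < x ∧ x < z) ∨ (z < x ∧ x < y)

/-- A nonempty list is unimodal: strictly decreasing down to its minimum
(at 0-indexed position `k`), then strictly increasing. -/
def Unimodal (L : List ℕ) : Prop :=
  ∃ k : ℕ, k < L.length ∧
    (∀ a b : ℕ, a < b → b ≤ k → L.getD b 0 < L.getD a 0) ∧
    (∀ a b : ℕ, k ≤ a → a < b → b < L.length → L.getD a 0 < L.getD b 0)

/-- Row `i` of the distinguished tableau of shape `Z(d,r)`:
`(r+d-i, …, r+1, 0, 1, …, r+d-i)`. -/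
def rowWord (d r i : ℕ) : List ℕ :=
  (List.range (r + 2 * (d - i) + 1)).map fun t =>
    if t < d - i then r + (d - i) - t else t - (d - i)

/-- The reading word `π(T) = T_d T_{d-1} ⋯ T_1` of the distinguished tableau of
shape `Z(d,r)`. -/
def piWord (d r : ℕ) : List ℕ :=
  (List.range d).flatMap fun k => rowWord d r (d - k)

/-- `μ_i = Z(d,r)_i - λ_i`. -/
def muF (d r : ℕ) (lam : ℕ → ℕ) (i : ℕ) : ℕ := r + 2 * d + 1 - 2 * i - lam i

/-- `σ_i = μ_1 + ⋯ + μ_i`. -/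
def sigmaF (d r : ℕ) (lam : ℕ → ℕ) (i : ℕ) : ℕ := ∑ t ∈ Finset.Icc 1 i, muF d r lam t

/-- `ν_i = min{μ_i, …, μ_d}`. -/
noncomputable def nuF (d r : ℕ) (lam : ℕ → ℕ) (i : ℕ) : ℕ :=
  sInf {m : ℕ | ∃ j : ℕ, i ≤ j ∧ j ≤ d ∧ m = muF d r lam j}

/-- The word `a^λ`: the concatenation over `i = 1, …, d` of the increasing runs
`(d+r-i-μ_i+1, …, d+r-i)`. -/
def aLamWord (d r : ℕ) (lam : ℕ → ℕ) : List ℕ :=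
  (List.range d).flatMap fun k =>
    (List.range (muF d r lam (k + 1))).map fun t =>
      d + r - (k + 1) - muF d r lam (k + 1) + 1 + t

/-- Row `i` of the tableau `P(w^λ)`: entries `P(i,c) = c` for `c ≥ 0` and
`P(i,c) = r - c - ν_{d+1+c}` for `c < 0`. -/
noncomputable def rowWordP (d r : ℕ) (lam : ℕ → ℕ) (i : ℕ) : List ℕ :=
  (List.range (lam i)).map fun t =>
    if t < d - i then r + (d - i) - t - nuF d r lam (i + 1 + t) else t - (d - i)

/-- The reading word `π(P(w^λ))`. -/
noncomputable def piWordP (d r : ℕ) (lam : ℕ → ℕ) : List ℕ :=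
  (List.range d).flatMap fun k => rowWordP d r lam (d - k)

/-- The shape obtained from `λ` by adding one box at the end of row `i`. -/
def stepShape (lam : ℕ → ℕ) (i : ℕ) : ℕ → ℕ :=
  fun t => if t = i then lam i + 1 else lam t

/-- The box-adding map `f_i` on fillings: swap columns `j = λ_i + i - d` and `j + 1`
(in rows `1, …, i-1`), and put the value `N + 1` in the new box `(i, j)`. -/
def addBox (d : ℕ) (lam : ℕ → ℕ) (i : ℕ) (N : ℕ) (B : ℤ × ℤ → ℕ) : ℤ × ℤ → ℕ :=
  fun p =>
    if p = ((i : ℤ), (lam i : ℤ) + (i : ℤ) - (d : ℤ)) then N + 1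
    else if 1 ≤ p.1 ∧ p.1 < (i : ℤ) ∧ p.2 = (lam i : ℤ) + (i : ℤ) - (d : ℤ) then
      B (p.1, p.2 + 1)
    else if 1 ≤ p.1 ∧ p.1 < (i : ℤ) ∧ p.2 = (lam i : ℤ) + (i : ℤ) - (d : ℤ) + 1 then
      B (p.1, p.2 - 1)
    else B p

/-- Successively apply the box-adding maps along a list of row indices,
tracking the current shape. -/
def FmapAux (d : ℕ) : List ℕ → (ℕ → ℕ) → (ℤ × ℤ → ℕ) → (ℤ × ℤ → ℕ)
  | [], _, B => B
  | i :: rest, lam, B => FmapAux d rest (stepShape lam i) (addBox d lam i (sizeP d lam) B)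

/-- The shape after successively adding boxes along a list of row indices. -/
def shapeAux : List ℕ → (ℕ → ℕ) → (ℕ → ℕ)
  | [], lam => lam
  | i :: rest, lam => shapeAux rest (stepShape lam i)

/-- The list of row indices `1^{μ_1} 2^{μ_2} ⋯ d^{μ_d}` used to pad `λ` to `Z(d,r)`. -/
def rowsList (d r : ℕ) (lam : ℕ → ℕ) : List ℕ :=
  (List.range d).flatMap fun k => List.replicate (muF d r lam (k + 1)) (k + 1)

/-- `BS(Z(d,r))|_λ`: balanced tableaux of shape `Z(d,r)` such that for each
`i ∈ {1,…,d}` the entries `N + σ_{i-1} + 1, …, N + σ_i` all occur in row `i`. -/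
def BSRestricted (d r : ℕ) (lam : ℕ → ℕ) : Set (ℤ × ℤ → ℕ) :=
  {T | IsBalanced d (Zlam d r) T ∧ ∀ i : ℕ, 1 ≤ i → i ≤ d →
    ∀ k : ℕ, sizeP d lam + sigmaF d r lam (i - 1) + 1 ≤ k →
      k ≤ sizeP d lam + sigmaF d r lam i →
      ∃ c : ℤ, ((i : ℤ), c) ∈ Diagram d (Zlam d r) ∧ T ((i : ℤ), c) = k}

/-- `w ∈ W(B_n)` pattern embeds the signed pattern `v` (given as its one-line
notation, a list of nonzero integers). -/
def PatternEmbeds (n : ℕ) (w : Equiv.Perm ℤ) (v : List ℤ) : Prop :=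
  ∃ idx : Fin v.length → ℤ, StrictMono idx ∧
    (∀ j, 1 ≤ idx j ∧ idx j ≤ (n : ℤ)) ∧
    (∀ j, 0 < w (idx j) ↔ 0 < v.get j) ∧
    (∀ j k, |w (idx j)| < |w (idx k)| ↔ |v.get j| < |v.get k|)


/-!
Measure the failure of balance at a box by its defect: the number of larger entries in its extended
hook minus the number required. A balanced `B` satisfies `B (a, j) < B (a, j + 1)` in every row
`a < i`. Indeed, in the lowest row where this fails, the column swap would inject the boxes larger
than `B (a, j)` into those larger than `B (a, j + 1)`, although the rank drops by one from `(a, j)`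
to `(a, j + 1)`; this contradicts equality of the two defects.

The column swap matches the larger entries of `p` in `B` with those of its image in `B^#`, up to the
new box and the neighbour exchanged with `p`. The new box counts exactly where the rank grows or the
swap moves a box left, so the defects agree once `B (a, j) < B (a, j + 1)` holds. Without this
inequality, both defects in row `a` change by one, so their equality, hence the inequality itself,
can be read off from `B^#` as well.
-/

theorem ncard_sdiff_singleton_add_ite {α : Type*} {s : Set α} (hs : s.Finite) (a : α)
    [Decidable (a ∈ s)] : (s \ {a}).ncard + (if a ∈ s then 1 else 0) = s.ncard := by
  split_ifs with ha
  · exact Set.ncard_sdiff_singleton_add_one ha hs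
  · rw [Set.sdiff_singleton_eq_self ha, add_zero]

section Diagram

variable {d : ℕ} {lam : ℕ → ℕ}

theorem IsStrictPartition.antitoneOn_add_index (hlam : IsStrictPartition d lam) :
    AntitoneOn (fun a => lam a + a) (Set.Icc 1 d) := by
  refine antitoneOn_of_succ_le Set.ordConnected_Icc fun a _ ha ha' => ?_
  have := hlam.1 a ha.1 (Nat.lt_of_succ_le ha'.2)
  simp only [Order.succ_eq_add_one]
  omega

theorem mem_extHook {a c : ℤ} {q : ℤ × ℤ} :
    q ∈ ExtHook d lam a c ↔ q = (a, c) ∨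
      (q ∈ Diagram d lam ∧
        (q.1 = a ∧ c < q.2 ∨ q.2 = c ∧ a < q.1 ∨ c < 0 ∧ q.1 = (d : ℤ) + 1 + c)) ∨
      (c < 0 ∧ q = ((d : ℤ) + 1 + c, c)) := by
  simp only [ExtHook, Hook, Set.mem_union, Set.mem_singleton_iff, Set.mem_ofPred_eq]
  tauto

theorem extHook_finite (hD : (Diagram d lam).Finite) (a c : ℤ) : (ExtHook d lam a c).Finite := by
  refine ((hD.insert (a, c)).insert ((d : ℤ) + 1 + c, c)).subset fun q hq => ?_
  rw [Set.mem_insert_iff, Set.mem_insert_iff]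
  rcases mem_extHook.1 hq with h | h | h
  exacts [.inr (.inl h), .inr (.inr h.1), .inl h.2]

theorem rk_add_one_right {a c : ℤ} (hc : 0 ≤ c) : rk d lam a (c + 1) = rk d lam a c - 1 := by
  rw [rk, rk, if_pos hc, if_pos (by omega)]
  omega

theorem cast_stepShape {i : ℕ} {a : ℤ} (ha : 0 ≤ a) :
    (stepShape lam i a.toNat : ℤ) = lam a.toNat + if a = i then 1 else 0 := by
  lift a to ℕ using ha
  by_cases h : a = i <;> simp [stepShape, h]

theorem sizeP_stepShape {i : ℕ} (hi : i ∈ Finset.Icc 1 d) :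
    sizeP d (stepShape lam i) = sizeP d lam + 1 := by
  have hstep (a : ℕ) : stepShape lam i a = lam a + if a = i then 1 else 0 := by
    by_cases h : a = i <;> simp [stepShape, h]
  simp only [sizeP, hstep, Finset.sum_add_distrib, Finset.sum_ite_eq', if_pos hi]

theorem rk_stepShape_of_row_lt {i : ℕ} {a c : ℤ} (ha : 0 ≤ a) (hai : a < i) (hc : 0 ≤ c) :
    rk d (stepShape lam i) a c = rk d lam a c := by
  rw [rk, rk, if_pos hc, if_pos hc, cast_stepShape ha, if_neg hai.ne, add_zero]

end Diagram

section Defect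

variable {d : ℕ} {lam : ℕ → ℕ} {B : ℤ × ℤ → ℕ}

/-- The boxes of the extended hook of `p` whose entry exceeds the entry of `p`. -/
def larger (d : ℕ) (lam : ℕ → ℕ) (B : ℤ × ℤ → ℕ) (p : ℤ × ℤ) : Set (ℤ × ℤ) :=
  {q ∈ ExtHook d lam p.1 p.2 | B p < ExtFilling d B q}

/-- The signed failure of the balance condition at `p`: the number of larger entries in the
extended hook of `p` minus the number `rk p - 1` that balance prescribes. -/
noncomputable def defect (d : ℕ) (lam : ℕ → ℕ) (B : ℤ × ℤ → ℕ) (p : ℤ × ℤ) : ℤ :=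
  (larger d lam B p).ncard - (rk d lam p.1 p.2 - 1)

theorem isBalanced_iff_defect_eq_zero :
    IsBalanced d lam B ↔ IsFilling d lam B ∧ ∀ p ∈ Diagram d lam, defect d lam B p = 0 := by
  simp only [IsBalanced, defect, larger, sub_eq_zero]

theorem IsFilling.le_sizeP (hB : IsFilling d lam B) (p : ℤ × ℤ) : B p ≤ sizeP d lam := by
  by_cases hp : p ∈ Diagram d lam
  · exact (hB.1.mapsTo hp).2
  · simp [hB.2 p hp]

theorem IsFilling.diagram_finite (hB : IsFilling d lam B) : (Diagram d lam).Finite :=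
  hB.1.finite_iff_finite.2 (Set.finite_Icc _ _)

theorem IsFilling.larger_finite (hB : IsFilling d lam B) (p : ℤ × ℤ) :
    (larger d lam B p).Finite :=
  (extHook_finite hB.diagram_finite p.1 p.2).subset fun _ hq => hq.1

theorem IsFilling.larger_eq_empty (hB : IsFilling d lam B) {p : ℤ × ℤ}
    (hp : B p = sizeP d lam) : larger d lam B p = ∅ := by
  refine Set.eq_empty_of_forall_notMem fun q hq => (hp ▸ hq.2).not_ge ?_
  rw [ExtFilling]
  split_ifs <;> exact hB.le_sizeP _

theorem extFilling_of_ne {q : ℤ × ℤ} (hq : q.2 ≠ q.1 - (d + 1)) : ExtFilling d B q = B q :=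
  if_neg hq

theorem mem_larger_of_nonneg {a c : ℤ} (had : a ≤ d) (hc : 0 ≤ c) {q : ℤ × ℤ} :
    q ∈ larger d lam B (a, c) ↔
      q ∈ Diagram d lam ∧ (q.1 = a ∧ c < q.2 ∨ q.2 = c ∧ a < q.1) ∧ B (a, c) < B q := by
  have hext (hq : 0 ≤ q.2) (hqd : q.1 ≤ d) : ExtFilling d B q = B q :=
    extFilling_of_ne (by omega)
  simp only [larger, Set.mem_ofPred_eq, mem_extHook, hc.not_gt, false_and, or_false]
  constructor
  · rintro ⟨rfl | ⟨hqD, hq⟩, hlt⟩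
    · exact absurd hlt (by rw [hext hc had]; exact lt_irrefl _)
    · exact ⟨hqD, hq, hext (by omega) hqD.2.1 ▸ hlt⟩
  · rintro ⟨hqD, hq, hlt⟩
    exact ⟨.inr ⟨hqD, hq⟩, (hext (by omega) hqD.2.1).symm ▸ hlt⟩

theorem notMem_larger_self {p : ℤ × ℤ} (hp : p ∈ Diagram d lam) : p ∉ larger d lam B p := by
  rintro ⟨-, hlt⟩
  rw [extFilling_of_ne (by have := hp.2.2.1; omega)] at hlt
  exact lt_irrefl _ hlt

theorem add_one_right_mem_larger_iff {a c : ℤ} (had : a ≤ d) (hc : 0 ≤ c)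
    (hD : (a, c + 1) ∈ Diagram d lam) :
    (a, c + 1) ∈ larger d lam B (a, c) ↔ B (a, c) < B (a, c + 1) := by
  simp [mem_larger_of_nonneg had hc, hD]

theorem notMem_larger_add_one_right {a c : ℤ} (had : a ≤ d) (hc : 0 ≤ c) :
    (a, c) ∉ larger d lam B (a, c + 1) := by
  rw [mem_larger_of_nonneg had (by omega)]
  simp only
  omega

end Defect

section ColSwap

/-- The permutation of `ℤ × ℤ` exchanging columns `j` and `j + 1` in the rows `1, …, i - 1`. -/
def colSwap (i j : ℤ) : Equiv.Perm (ℤ × ℤ) :=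
  (Equiv.refl ℤ).prodShear fun a => if 1 ≤ a ∧ a < i then Equiv.swap j (j + 1) else 1

variable {i j a : ℤ} {p : ℤ × ℤ}

theorem colSwap_apply (i j : ℤ) (p : ℤ × ℤ) :
    colSwap i j p = if 1 ≤ p.1 ∧ p.1 < i ∧ p.2 = j then (p.1, p.2 + 1)
      else if 1 ≤ p.1 ∧ p.1 < i ∧ p.2 = j + 1 then (p.1, p.2 - 1) else p := by
  simp only [colSwap, Equiv.prodShear_apply, Equiv.refl_apply]
  grind [Equiv.Perm.one_apply]

theorem colSwap_colSwap (i j : ℤ) (p : ℤ × ℤ) : colSwap i j (colSwap i j p) = p := by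
  by_cases h : 1 ≤ p.1 ∧ p.1 < i <;> simp [colSwap, h]

theorem colSwap_left (h1 : 1 ≤ a) (hai : a < i) : colSwap i j (a, j) = (a, j + 1) := by
  simp [colSwap, h1, hai]

theorem colSwap_right (h1 : 1 ≤ a) (hai : a < i) : colSwap i j (a, j + 1) = (a, j) := by
  simp [colSwap, h1, hai]

theorem colSwap_of_le (hi : i ≤ p.1) : colSwap i j p = p := by
  simp [colSwap, hi.not_gt]

theorem colSwap_of_ne (hj : p.2 ≠ j) (hj' : p.2 ≠ j + 1) : colSwap i j p = p := by
  by_cases h : 1 ≤ p.1 ∧ p.1 < i <;> simp [colSwap, h, Equiv.swap_apply_of_ne_of_ne hj hj']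

theorem colSwap_cases (i j : ℤ) (p : ℤ × ℤ) :
    colSwap i j p = p ∨ ∃ a, 1 ≤ a ∧ a < i ∧ (p = (a, j) ∨ p = (a, j + 1)) := by
  obtain ⟨a, c⟩ := p
  by_cases h : 1 ≤ a ∧ a < i
  · by_cases hj : c = j
    · exact .inr ⟨a, h.1, h.2, .inl (by rw [hj])⟩
    · by_cases hj' : c = j + 1
      · exact .inr ⟨a, h.1, h.2, .inr (by rw [hj'])⟩
      · exact .inl (colSwap_of_ne hj hj')
  · exact .inl (by simp [colSwap, h])

theorem colSwap_new (i j : ℤ) : colSwap i j (i, j) = (i, j) := colSwap_of_le le_rfl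

theorem colSwap_ne_new (hp : p ≠ (i, j)) : colSwap i j p ≠ (i, j) := by
  rw [← colSwap_new]
  exact (colSwap i j).injective.ne hp

end ColSwap

/-- The inverse of the box-adding map: delete the entry of the new box `(i, j)` and swap columns
`j` and `j + 1` back. -/
def removeBox (i : ℕ) (j : ℤ) (T : ℤ × ℤ → ℕ) : ℤ × ℤ → ℕ :=
  Function.update (T ∘ colSwap i j) (i, j) 0

theorem removeBox_new (i : ℕ) (j : ℤ) (T : ℤ × ℤ → ℕ) : removeBox i j T (i, j) = 0 :=
  Function.update_self ..

/-- The hypotheses on the new box `(i, j)`: it extends row `i` of `D(λ)`, and columns `j` and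
`j + 1` of `D(λ)` consist exactly of the boxes in rows `1, …, i - 1`. -/
structure IsAddableBox (d : ℕ) (lam : ℕ → ℕ) (i : ℕ) (j : ℤ) : Prop where
  one_le_row : 1 ≤ i
  row_le : i ≤ d
  one_le_col : 1 ≤ j
  col_eq : j = lam i + i - d
  mem_col : ∀ a : ℤ, (a, j) ∈ Diagram d lam ↔ 1 ≤ a ∧ a < i
  mem_col_succ : ∀ a : ℤ, (a, j + 1) ∈ Diagram d lam ↔ 1 ≤ a ∧ a < i

theorem IsStrictPartition.isAddableBox {d : ℕ} {lam : ℕ → ℕ} (hlam : IsStrictPartition d lam)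
    {i : ℕ} (hi1 : 1 ≤ i) (hid : i ≤ d) (hcond : i = 1 ∨ lam i + 3 ≤ lam (i - 1)) :
    IsAddableBox d lam i (lam i + i - d) := by
  have hone : 1 ≤ (lam i : ℤ) + i - d := by
    have := hlam.antitoneOn_add_index ⟨hi1, hid⟩ ⟨hi1.trans hid, le_rfl⟩ hid
    have := hlam.2
    simp only at *
    omega
  have habove (a : ℕ) (ha : 1 ≤ a) (hai : a < i) : lam i + i + 2 ≤ lam a + a := by
    have := hlam.antitoneOn_add_index (a := a) (b := i - 1) ⟨ha, by omega⟩
      ⟨by omega, by omega⟩ (by omega)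
    simp only at this
    omega
  have hbelow (a : ℕ) (hia : i ≤ a) (had : a ≤ d) : lam a + a ≤ lam i + i :=
    hlam.antitoneOn_add_index ⟨hi1, hid⟩ ⟨hi1.trans hia, had⟩ hia
  refine ⟨hi1, hid, hone, rfl, fun a => ?_, fun a => ?_⟩ <;>
    · simp only [Diagram, Set.mem_ofPred_eq]
      have := habove a.toNat
      have := hbelow a.toNat
      omega

namespace IsAddableBox

variable {d : ℕ} {lam : ℕ → ℕ} {i : ℕ} {j : ℤ} {N : ℕ} {B T : ℤ × ℤ → ℕ}

section Shape

theorem notMem_diagram (h : IsAddableBox d lam i j) : ((i : ℤ), j) ∉ Diagram d lam := by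
  simp [h.mem_col]

theorem diagram_stepShape (h : IsAddableBox d lam i j) :
    Diagram d (stepShape lam i) = insert ((i : ℤ), j) (Diagram d lam) := by
  ext ⟨a, c⟩
  obtain ⟨hi1, hid, hj1, hj, -, -⟩ := h
  simp only [Diagram, Set.mem_ofPred_eq, Set.mem_insert_iff, Prod.mk.injEq]
  by_cases ha : 0 ≤ a
  · rw [cast_stepShape ha]
    obtain rfl | hai := eq_or_ne a i
    · simp only [Int.toNat_natCast, if_true, true_and]
      omega
    · simp [hai]
  · omega

theorem sizeP_stepShape (h : IsAddableBox d lam i j) :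
    sizeP d (stepShape lam i) = sizeP d lam + 1 :=
  BST.sizeP_stepShape (Finset.mem_Icc.2 ⟨h.one_le_row, h.row_le⟩)

theorem colSwap_mem_diagram (h : IsAddableBox d lam i j) (p : ℤ × ℤ) :
    colSwap i j p ∈ Diagram d lam ↔ p ∈ Diagram d lam := by
  obtain hp | ⟨a, h1, hai, rfl | rfl⟩ := colSwap_cases i j p
  · rw [hp]
  · rw [colSwap_left h1 hai, h.mem_col, h.mem_col_succ]
  · rw [colSwap_right h1 hai, h.mem_col, h.mem_col_succ]

theorem mem_extHook_stepShape_of_ne (h : IsAddableBox d lam i j) {a c : ℤ} {q : ℤ × ℤ}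
    (hq : q ≠ ((i : ℤ), j)) :
    q ∈ ExtHook d (stepShape lam i) a c ↔ q ∈ ExtHook d lam a c := by
  simp [mem_extHook, h.diagram_stepShape, hq]

theorem new_mem_extHook_stepShape (h : IsAddableBox d lam i j) {p : ℤ × ℤ}
    (hp : p ∈ Diagram d lam) :
    ((i : ℤ), j) ∈ ExtHook d (stepShape lam i) p.1 p.2 ↔
      p.1 = i ∨ p.2 = j ∨ p.2 = (i : ℤ) - d - 1 := by
  obtain ⟨a, c⟩ := p
  have hid := h.row_le
  have hj1 := h.one_le_col
  have hrow (hai : a = i) : c < j := by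
    rw [h.col_eq]
    subst hai
    have := hp.2.2.2
    simp only [Int.toNat_natCast] at this
    omega
  have hcol (hcj : c = j) : a < i := ((h.mem_col a).1 (hcj ▸ hp)).2
  simp only [mem_extHook, h.diagram_stepShape, Set.mem_insert_iff, true_or, true_and,
    Prod.mk.injEq]
  omega

theorem col_ne_of_colSwap_eq_self (h : IsAddableBox d lam i j) {p : ℤ × ℤ}
    (hp : p ∈ Diagram d lam) (hfix : colSwap i j p = p) : p.2 ≠ j ∧ p.2 ≠ j + 1 := by
  obtain ⟨a, c⟩ := p
  constructor <;> rintro rfl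
  · obtain ⟨h1, hai⟩ := (h.mem_col a).1 hp
    simp [colSwap_left h1 hai] at hfix
  · obtain ⟨h1, hai⟩ := (h.mem_col_succ a).1 hp
    simp [colSwap_right h1 hai] at hfix

/- The swap reverses the order of `(a, j)` and `(a, j + 1)` within row `a`; `hq` excludes this
pair. All other boxes keep their position relative to `p`. -/
theorem colSwap_mem_extHook (h : IsAddableBox d lam i j) {p q : ℤ × ℤ}
    (hp : p ∈ Diagram d lam) (hq : q ≠ colSwap i j p) :
    colSwap i j q ∈ ExtHook d lam (colSwap i j p).1 (colSwap i j p).2 ↔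
      q ∈ ExtHook d lam p.1 p.2 := by
  have hj1 := h.one_le_col
  have hpcol := h.col_ne_of_colSwap_eq_self hp
  have hqcol := h.col_ne_of_colSwap_eq_self (p := q)
  rw [mem_extHook, mem_extHook, h.colSwap_mem_diagram]
  obtain hpfix | ⟨a, ha1, hai, rfl | rfl⟩ := colSwap_cases i j p <;>
    obtain hqfix | ⟨b, hb1, hbi, rfl | rfl⟩ := colSwap_cases i j q <;>
    grind [colSwap_left, colSwap_right]

theorem rk_stepShape (h : IsAddableBox d lam i j) {p : ℤ × ℤ} (hp : p ∈ Diagram d lam) :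
    rk d (stepShape lam i) p.1 p.2 =
      rk d lam p.1 p.2 + if p.1 = i ∨ p.2 = (i : ℤ) - d - 1 then 1 else 0 := by
  have hid := h.row_le
  obtain ⟨a, c⟩ := p
  obtain ⟨ha1, -, hc, -⟩ := hp
  simp only at *
  have hrow : d + 1 + c = (i : ℤ) ↔ c = (i : ℤ) - d - 1 := by omega
  unfold rk
  rw [cast_stepShape (by omega), cast_stepShape (by omega)]
  simp only [hrow]
  split_ifs <;> omega

end Shape

section Filling

theorem addBox_new (h : IsAddableBox d lam i j) : addBox d lam i N B ((i : ℤ), j) = N + 1 := by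
  simp [addBox, h.col_eq]

theorem addBox_of_ne (h : IsAddableBox d lam i j) {p : ℤ × ℤ} (hp : p ≠ ((i : ℤ), j)) :
    addBox d lam i N B p = B (colSwap i j p) := by
  rw [addBox, ← h.col_eq, if_neg hp, colSwap_apply]
  split_ifs <;> rfl

theorem addBox_colSwap (h : IsAddableBox d lam i j) {p : ℤ × ℤ} (hp : p ≠ ((i : ℤ), j)) :
    addBox d lam i N B (colSwap i j p) = B p := by
  rw [h.addBox_of_ne (colSwap_ne_new hp), colSwap_colSwap]

theorem extFilling_addBox_new (h : IsAddableBox d lam i j) :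
    ExtFilling d (addBox d lam i N B) ((i : ℤ), j) = N + 1 := by
  have := h.row_le
  have := h.one_le_col
  rw [extFilling_of_ne (by simp only; omega), h.addBox_new]

theorem extFilling_addBox_colSwap (h : IsAddableBox d lam i j) {q : ℤ × ℤ}
    (hq : q ≠ ((i : ℤ), j)) :
    ExtFilling d (addBox d lam i N B) (colSwap i j q) = ExtFilling d B q := by
  have hid := h.row_le
  have hj1 := h.one_le_col
  have hzero (a : ℤ) : addBox d lam i N B (a, 0) = B (a, 0) := by
    have hx : (a, 0) ≠ ((i : ℤ), j) := by
      rw [Ne, Prod.mk.injEq]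
      omega
    rw [h.addBox_of_ne hx, colSwap_of_ne (by simp only; omega) (by simp only; omega)]
  obtain hfix | ⟨a, h1, hai, rfl | rfl⟩ := colSwap_cases i j q
  · have := h.addBox_colSwap (N := N) (B := B) hq
    rw [hfix] at this ⊢
    simp only [ExtFilling, hzero, this]
  · rw [extFilling_of_ne (q := (a, j)) (by simp only; omega),
      ← h.addBox_colSwap (N := N) (B := B) hq, colSwap_left h1 hai,
      extFilling_of_ne (by simp only; omega)]
  · rw [extFilling_of_ne (q := (a, j + 1)) (by simp only; omega),
      ← h.addBox_colSwap (N := N) (B := B) hq, colSwap_right h1 hai,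
      extFilling_of_ne (by simp only; omega)]

theorem isFilling_addBox_iff (h : IsAddableBox d lam i j) (hB : B ((i : ℤ), j) = 0) :
    IsFilling d (stepShape lam i) (addBox d lam i (sizeP d lam) B) ↔ IsFilling d lam B := by
  have hnew := h.notMem_diagram
  rw [IsFilling, IsFilling, h.diagram_stepShape, h.sizeP_stepShape]
  refine and_congr ?_ ?_
  · have hT : Set.EqOn (addBox d lam i (sizeP d lam) B) (B ∘ colSwap i j) (Diagram d lam) :=
      fun p hp => h.addBox_of_ne (ne_of_mem_of_not_mem hp hnew)
    rw [← Set.insert_Icc_right_eq_Icc_add_one (by omega),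
      ← h.addBox_new (N := sizeP d lam) (B := B),
      Set.BijOn.insert_iff hnew (by rw [h.addBox_new]; simp)]
    rw [hT.bijOn_iff, Set.bijOn_comp_iff (colSwap i j).injective.injOn,
      ((colSwap i j).bijOn h.colSwap_mem_diagram).image_eq]
  · constructor
    · intro hT p hp
      by_cases hpx : p = ((i : ℤ), j)
      · rw [hpx, hB]
      · rw [← h.addBox_colSwap (N := sizeP d lam) (B := B) hpx]
        refine hT _ ?_
        rw [Set.mem_insert_iff, h.colSwap_mem_diagram]
        exact not_or.2 ⟨colSwap_ne_new hpx, hp⟩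
    · intro hB p hp
      rw [Set.mem_insert_iff, not_or] at hp
      rw [h.addBox_of_ne hp.1]
      exact hB _ (mt (h.colSwap_mem_diagram p).1 hp.2)

end Filling

section Defect

theorem new_notMem_larger (h : IsAddableBox d lam i j) (hB : IsFilling d lam B) (p : ℤ × ℤ) :
    ((i : ℤ), j) ∉ larger d lam B p := by
  have hid := h.row_le
  have hj1 := h.one_le_col
  rintro ⟨-, hlt⟩
  rw [extFilling_of_ne (by simp only; omega), hB.2 _ h.notMem_diagram] at hlt
  exact Nat.not_lt_zero _ hlt

theorem colSwap_mem_larger_addBox (h : IsAddableBox d lam i j) {p q : ℤ × ℤ}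
    (hp : p ∈ Diagram d lam) (hqx : q ≠ ((i : ℤ), j)) (hq : q ≠ colSwap i j p) :
    colSwap i j q ∈ larger d (stepShape lam i) (addBox d lam i N B) (colSwap i j p) ↔
      q ∈ larger d lam B p := by
  have hpx : p ≠ ((i : ℤ), j) := ne_of_mem_of_not_mem hp h.notMem_diagram
  refine and_congr ?_ ?_
  · rw [h.mem_extHook_stepShape_of_ne (colSwap_ne_new hqx), h.colSwap_mem_extHook hp hq]
  · rw [h.addBox_colSwap hpx, h.extFilling_addBox_colSwap hqx]

theorem new_mem_larger_addBox (h : IsAddableBox d lam i j) (hB : IsFilling d lam B)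
    {p : ℤ × ℤ} (hp : p ∈ Diagram d lam) :
    ((i : ℤ), j) ∈ larger d (stepShape lam i) (addBox d lam i (sizeP d lam) B) p ↔
      p.1 = i ∨ p.2 = j ∨ p.2 = (i : ℤ) - d - 1 := by
  have hlt : addBox d lam i (sizeP d lam) B p < sizeP d lam + 1 := by
    rw [h.addBox_of_ne (ne_of_mem_of_not_mem hp h.notMem_diagram)]
    exact Nat.lt_succ_of_le (hB.le_sizeP _)
  rw [← h.new_mem_extHook_stepShape hp]
  exact and_iff_left (by rwa [h.extFilling_addBox_new])

theorem ncard_larger_addBox_sdiff (h : IsAddableBox d lam i j) (hB : IsFilling d lam B)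
    {p : ℤ × ℤ} (hp : p ∈ Diagram d lam) :
    ((larger d (stepShape lam i) (addBox d lam i (sizeP d lam) B) (colSwap i j p) \ {p}) \
      {((i : ℤ), j)}).ncard = (larger d lam B p \ {colSwap i j p}).ncard := by
  refine ((colSwap i j).bijOn fun q => ?_).ncard_eq.symm
  obtain rfl | hqx := eq_or_ne q (i, j)
  · simp [colSwap_new, h.new_notMem_larger hB]
  obtain rfl | hqp := eq_or_ne q (colSwap i j p)
  · simp [colSwap_colSwap]
  have hqp' : colSwap i j q ≠ p := fun e => hqp (by rw [← e, colSwap_colSwap])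
  simp only [Set.mem_sdiff, Set.mem_singleton_iff, colSwap_ne_new hqx, hqp, hqp', not_false_eq_true,
    and_true, h.colSwap_mem_larger_addBox hp hqx hqp]

open Classical in
theorem ncard_larger_addBox (h : IsAddableBox d lam i j) (hB : IsFilling d lam B)
    {p : ℤ × ℤ} (hp : p ∈ Diagram d lam) :
    ((larger d (stepShape lam i) (addBox d lam i (sizeP d lam) B) (colSwap i j p)).ncard : ℤ) =
      (larger d lam B p).ncard - (if colSwap i j p ∈ larger d lam B p then 1 else 0) +
      (if p ∈ larger d (stepShape lam i) (addBox d lam i (sizeP d lam) B) (colSwap i j p)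
        then 1 else 0) +
      if (colSwap i j p).1 = i ∨ (colSwap i j p).2 = j ∨ (colSwap i j p).2 = (i : ℤ) - d - 1
        then 1 else 0 := by
  have hT := (h.isFilling_addBox_iff (hB.2 _ h.notMem_diagram)).2 hB
  have hfin := hT.larger_finite (colSwap i j p)
  have hpx : ((i : ℤ), j) ≠ p := (ne_of_mem_of_not_mem hp h.notMem_diagram).symm
  have hmid := h.ncard_larger_addBox_sdiff hB hp
  have hold := ncard_sdiff_singleton_add_ite (hB.larger_finite p) (colSwap i j p)
  have hnew := ncard_sdiff_singleton_add_ite hfin p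
  have hbox := ncard_sdiff_singleton_add_ite (hfin.sdiff (t := {p})) ((i : ℤ), j)
  simp only [Set.mem_sdiff, Set.mem_singleton_iff, hpx, not_false_eq_true, and_true,
    h.new_mem_larger_addBox hB ((h.colSwap_mem_diagram p).2 hp)] at hbox
  split_ifs at * <;> omega

theorem defect_addBox_of_colSwap_eq_self (h : IsAddableBox d lam i j) (hB : IsFilling d lam B)
    {p : ℤ × ℤ} (hp : p ∈ Diagram d lam) (hfix : colSwap i j p = p) :
    defect d (stepShape lam i) (addBox d lam i (sizeP d lam) B) p = defect d lam B p := by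
  have hcount := h.ncard_larger_addBox hB hp
  have hp' : p ∈ Diagram d (stepShape lam i) := by
    rw [h.diagram_stepShape]
    exact Set.mem_insert_of_mem _ hp
  simp only [hfix, notMem_larger_self hp, notMem_larger_self hp', if_false,
    (h.col_ne_of_colSwap_eq_self hp hfix).1, false_or] at hcount
  rw [defect, defect, hcount, h.rk_stepShape hp]
  ring

theorem defect_addBox_col_succ (h : IsAddableBox d lam i j) (hB : IsFilling d lam B) {a : ℤ}
    (h1 : 1 ≤ a) (hai : a < i) :
    defect d (stepShape lam i) (addBox d lam i (sizeP d lam) B) (a, j + 1) =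
      defect d lam B (a, j) + if B (a, j) < B (a, j + 1) then 0 else 1 := by
  have had : a ≤ d := hai.le.trans (mod_cast h.row_le)
  have hj : 0 ≤ j := zero_le_one.trans h.one_le_col
  have hcount := h.ncard_larger_addBox hB ((h.mem_col a).2 ⟨h1, hai⟩)
  have hbox : ¬(a = i ∨ j + 1 = j ∨ j + 1 = (i : ℤ) - d - 1) := by
    have := h.row_le
    omega
  simp only [colSwap_left h1 hai, hbox, notMem_larger_add_one_right had hj,
    add_one_right_mem_larger_iff had hj ((h.mem_col_succ a).2 ⟨h1, hai⟩), if_false,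
    add_zero] at hcount
  rw [defect, defect, hcount, rk_stepShape_of_row_lt (by omega) hai (by omega),
    rk_add_one_right hj]
  split_ifs <;> ring

theorem defect_addBox_col (h : IsAddableBox d lam i j) (hB : IsFilling d lam B) {a : ℤ}
    (h1 : 1 ≤ a) (hai : a < i) :
    defect d (stepShape lam i) (addBox d lam i (sizeP d lam) B) (a, j) =
      defect d lam B (a, j + 1) + if B (a, j + 1) < B (a, j) then 1 else 0 := by
  have had : a ≤ d := hai.le.trans (mod_cast h.row_le)
  have hj : 0 ≤ j := zero_le_one.trans h.one_le_col
  have hp := (h.mem_col_succ a).2 ⟨h1, hai⟩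
  have hpx : (a, j) ≠ ((i : ℤ), j) := by simp [hai.ne]
  have hpx' : (a, j + 1) ≠ ((i : ℤ), j) := by simp
  have hcount := h.ncard_larger_addBox hB hp
  have hnew := add_one_right_mem_larger_iff (B := addBox d lam i (sizeP d lam) B) had hj
    (h.diagram_stepShape ▸ Set.mem_insert_of_mem _ hp)
  rw [h.addBox_of_ne hpx, h.addBox_of_ne hpx', colSwap_left h1 hai, colSwap_right h1 hai] at hnew
  simp only [colSwap_right h1 hai, notMem_larger_add_one_right had hj, hnew, true_or, or_true,
    if_true, if_false, sub_zero] at hcount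
  rw [defect, defect, hcount, rk_stepShape_of_row_lt (by omega) hai hj, rk_add_one_right hj]
  ring

theorem defect_col_lt_defect_col_succ (h : IsAddableBox d lam i j) (hB : IsFilling d lam B)
    {a : ℤ} (h1 : 1 ≤ a) (hai : a < i) (hle : B (a, j + 1) ≤ B (a, j))
    (hbelow : ∀ b : ℤ, a < b → b < i → B (b, j) < B (b, j + 1)) :
    defect d lam B (a, j) < defect d lam B (a, j + 1) := by
  have had : a ≤ d := hai.le.trans (mod_cast h.row_le)
  have hj : 0 ≤ j := zero_le_one.trans h.one_le_col
  have hcard : (larger d lam B (a, j)).ncard ≤ (larger d lam B (a, j + 1)).ncard := by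
    refine Set.ncard_le_ncard_of_injOn (colSwap i j) (fun q hq => ?_)
      (colSwap i j).injective.injOn (hB.larger_finite _)
    obtain ⟨hqD, hook, hlt⟩ := (mem_larger_of_nonneg had hj).1 hq
    rw [mem_larger_of_nonneg had (by omega), h.colSwap_mem_diagram]
    refine ⟨hqD, ?_⟩
    obtain ⟨b, c⟩ := q
    rcases hook with ⟨rfl, hc⟩ | ⟨rfl, hb⟩
    · have hne : c ≠ j + 1 := by
        rintro rfl
        exact hlt.not_ge hle
      rw [colSwap_of_ne hc.ne' hne]
      exact ⟨.inl ⟨rfl, by simp only at *; omega⟩, hle.trans_lt hlt⟩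
    · have hbi := ((h.mem_col b).1 hqD).2
      rw [colSwap_left (by simp only at *; omega) hbi]
      exact ⟨.inr ⟨rfl, hb⟩, hle.trans_lt (hlt.trans (hbelow b hb hbi))⟩
  rw [defect, defect, rk_add_one_right hj]
  dsimp only
  omega

theorem col_lt_col_succ_of_defect_eq (h : IsAddableBox d lam i j) (hB : IsFilling d lam B)
    (heq : ∀ a : ℤ, 1 ≤ a → a < i → defect d lam B (a, j) = defect d lam B (a, j + 1))
    (a : ℤ) (h1 : 1 ≤ a) (hai : a < i) : B (a, j) < B (a, j + 1) := by
  by_contra! hle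
  refine (heq a h1 hai).not_lt (h.defect_col_lt_defect_col_succ hB h1 hai hle fun b hab hbi => ?_)
  exact h.col_lt_col_succ_of_defect_eq hB heq b (by omega) hbi
termination_by ((i : ℤ) - a).toNat
decreasing_by omega

theorem defect_addBox_colSwap (h : IsAddableBox d lam i j) (hB : IsFilling d lam B)
    (hlt : ∀ a : ℤ, 1 ≤ a → a < i → B (a, j) < B (a, j + 1)) {p : ℤ × ℤ}
    (hp : p ∈ Diagram d lam) :
    defect d (stepShape lam i) (addBox d lam i (sizeP d lam) B) (colSwap i j p) =
      defect d lam B p := by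
  obtain hfix | ⟨a, h1, hai, rfl | rfl⟩ := colSwap_cases i j p
  · rw [hfix, h.defect_addBox_of_colSwap_eq_self hB hp hfix]
  · rw [colSwap_left h1 hai, h.defect_addBox_col_succ hB h1 hai, if_pos (hlt a h1 hai), add_zero]
  · rw [colSwap_right h1 hai, h.defect_addBox_col hB h1 hai, if_neg (hlt a h1 hai).not_gt,
      add_zero]

theorem defect_addBox_new (h : IsAddableBox d lam i j) (hB : IsFilling d lam B) :
    defect d (stepShape lam i) (addBox d lam i (sizeP d lam) B) (i, j) = 0 := by
  have hj1 := h.one_le_col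
  have hT := (h.isFilling_addBox_iff (hB.2 _ h.notMem_diagram)).2 hB
  have hrk : rk d (stepShape lam i) i j = 1 := by
    rw [rk, if_pos (by omega), cast_stepShape (by omega), if_pos rfl, Int.toNat_natCast, h.col_eq]
    ring
  rw [defect, hT.larger_eq_empty (by rw [h.addBox_new, h.sizeP_stepShape]), hrk]
  simp

theorem isBalanced_addBox_iff (h : IsAddableBox d lam i j) (hB0 : B ((i : ℤ), j) = 0) :
    IsBalanced d (stepShape lam i) (addBox d lam i (sizeP d lam) B) ↔ IsBalanced d lam B := by
  rw [isBalanced_iff_defect_eq_zero, isBalanced_iff_defect_eq_zero, h.isFilling_addBox_iff hB0,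
    h.diagram_stepShape, Set.forall_mem_insert]
  refine and_congr_right fun hB => ?_
  rw [and_iff_right (h.defect_addBox_new hB)]
  constructor
  · intro hT p hp
    have hlt := h.col_lt_col_succ_of_defect_eq hB fun a h1 hai => by
      have hp := (h.mem_col a).2 ⟨h1, hai⟩
      have hp' := (h.mem_col_succ a).2 ⟨h1, hai⟩
      have hne : B (a, j) ≠ B (a, j + 1) := hB.1.injOn.ne hp hp' (by simp)
      have hleft := (h.defect_addBox_col hB h1 hai).symm.trans (hT _ hp)
      have hright := (h.defect_addBox_col_succ hB h1 hai).symm.trans (hT _ hp')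
      split_ifs at hleft hright <;> omega
    rw [← h.defect_addBox_colSwap hB hlt hp]
    exact hT _ ((h.colSwap_mem_diagram p).2 hp)
  · intro hbal p hp
    have hlt := h.col_lt_col_succ_of_defect_eq hB fun a h1 hai =>
      (hbal _ ((h.mem_col a).2 ⟨h1, hai⟩)).trans (hbal _ ((h.mem_col_succ a).2 ⟨h1, hai⟩)).symm
    have hp' := (h.colSwap_mem_diagram p).2 hp
    rw [← colSwap_colSwap i j p, h.defect_addBox_colSwap hB hlt hp']
    exact hbal _ hp'

end Defect

section RemoveBox

theorem removeBox_addBox (h : IsAddableBox d lam i j) (hB0 : B ((i : ℤ), j) = 0) :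
    removeBox i j (addBox d lam i N B) = B := by
  refine Function.update_eq_iff.2 ⟨hB0.symm, fun p hp => ?_⟩
  exact h.addBox_colSwap hp

theorem addBox_removeBox (h : IsAddableBox d lam i j) (hT : T ((i : ℤ), j) = N + 1) :
    addBox d lam i N (removeBox i j T) = T := by
  funext p
  obtain rfl | hp := eq_or_ne p (i, j)
  · rw [h.addBox_new, hT]
  · rw [h.addBox_of_ne hp, removeBox, Function.update_of_ne (colSwap_ne_new hp),
      Function.comp_apply, colSwap_colSwap]

end RemoveBox

end IsAddableBox

/-- the box-adding map `f_i` is a bijection from `BS(λ)` onto the set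
of balanced tableaux of shape `λ^#` whose entry at the new box is `N + 1`. -/
theorem addBox_bijOn (d : ℕ) (hd : 1 ≤ d)
    (lam : ℕ → ℕ) (hlam : IsStrictPartition d lam)
    (i : ℕ) (hi1 : 1 ≤ i) (hid : i ≤ d)
    (hcond : i = 1 ∨ lam i + 3 ≤ lam (i - 1)) :
    Set.BijOn (addBox d lam i (sizeP d lam))
      {B : ℤ × ℤ → ℕ | IsBalanced d lam B}
      {T : ℤ × ℤ → ℕ | IsBalanced d (stepShape lam i) T ∧
        T ((i : ℤ), (lam i : ℤ) + (i : ℤ) - (d : ℤ)) = sizeP d lam + 1} := by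
  have h := hlam.isAddableBox hi1 hid hcond
  have hzero {B : ℤ × ℤ → ℕ} (hB : IsFilling d lam B) := hB.2 _ h.notMem_diagram
  refine Set.InvOn.bijOn (f' := removeBox i (lam i + i - d)) ⟨?_, ?_⟩ ?_ ?_
  · exact fun B hB => h.removeBox_addBox (hzero hB.1)
  · exact fun T hT => h.addBox_removeBox hT.2
  · exact fun B hB => ⟨(h.isBalanced_addBox_iff (hzero hB.1)).2 hB, h.addBox_new⟩
  · rintro T ⟨hT, hnew⟩
    rw [← h.addBox_removeBox hnew, h.isBalanced_addBox_iff (removeBox_new ..)] at hT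
    exact hT

end BST
end

section
/- Fix integers d ≥ 1, r ≥ 0 and a strict partition λ with d parts such that λ_i ≤ r + 2d − 2i + 1 for all i. Let a = (a_1, …, a_ℓ) ∈ Red(w^{(d,r)}) with reflection order ro(a) = (γ_1, …, γ_ℓ), and let B_a be the balanced shifted tableau of shape Z(d,r) defined by B_a(x) = the unique t with γ_t = f(x). Then B_a ∈ BS(Z(d,r))|_λ if and only if (a_{N+1}, a_{N+2}, …, a_ℓ) = a^λ. -/
open scoped BigOperators

namespace BST

/-!
Write `pos L t x` for the place of the letter `x` in the one-line notation of the prefix product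
`s_{a_1} ⋯ s_{a_t}`. The root `e_x - e_y` is inverted at the step at which `x` and `y` change their
relative order, and right after that step their places are adjacent. So at the time `t = B(p)` a
third index is on the same side of both indices of the label of `p`: of any two labels that add up
to the label of `p`, exactly one has already occurred. Counting the labels of the extended hook that
are still to come gives the rank condition, hence `B_a` is always balanced.

For the restriction, follow the letters `-1, …, -d` backwards from `w^{(d,r)}`, where all places
are known. As long as the final letters of the word are those of `a^λ`, the place of each of these
letters is known, and the next letter of the word is that of `a^λ` exactly when it moves the
letter `-(d + 1 - i)` attached to the current row `i`, i.e. when the root inverted at this step is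
a label of row `i`.
-/

section SimpleReflections

theorem sB_zero_apply (i : ℤ) :
    sB 0 i = if i = 1 then -1 else if i = -1 then 1 else i := by
  simp only [sB, if_true, Equiv.swap_apply_def]

theorem sB_apply_of_ne_zero {a : ℕ} (ha : a ≠ 0) (i : ℤ) :
    sB a i = if i = a then (a : ℤ) + 1 else if i = a + 1 then (a : ℤ)
      else if i = -a then -(a : ℤ) - 1 else if i = -a - 1 then -(a : ℤ) else i := by
  simp only [sB, ha, if_false, Equiv.Perm.mul_apply, Equiv.swap_apply_def]
  split_ifs <;> omega

theorem odd_sB (a : ℕ) : Function.Odd (sB a) := by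
  intro i
  rcases eq_or_ne a 0 with rfl | ha
  · simp only [sB_zero_apply]; split_ifs <;> omega
  · simp only [sB_apply_of_ne_zero ha]; split_ifs <;> omega

theorem sB_sB (a : ℕ) (i : ℤ) : sB a (sB a i) = i := by
  rcases eq_or_ne a 0 with rfl | ha
  · exact Equiv.congr_fun (Equiv.swap_mul_self 1 (-1)) i
  · simp only [sB_apply_of_ne_zero ha]; split_ifs <;> omega

theorem sB_inv (a : ℕ) : (sB a)⁻¹ = sB a :=
  inv_eq_of_mul_eq_one_left (Equiv.ext (sB_sB a))

theorem sB_apply_of_lt_abs {a : ℕ} {i : ℤ} (h : (a : ℤ) + 1 < |i|) : sB a i = i := by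
  rw [lt_abs] at h
  rcases eq_or_ne a 0 with rfl | ha
  · rw [sB_zero_apply]; split_ifs <;> omega
  · rw [sB_apply_of_ne_zero ha]; split_ifs <;> omega

theorem eq_of_sB_lt_sB {a : ℕ} {X Y : ℤ} (hne : X ≠ -Y) (hlt : Y < X) (hsB : sB a X < sB a Y) :
    (X = a + 1 ∧ Y = a) ∨ (X = -a ∧ Y = -(a + 1)) := by
  rcases eq_or_ne a 0 with rfl | ha
  · simp only [sB_zero_apply] at hsB
    split_ifs at hsB <;> omega
  · simp only [sB_apply_of_ne_zero ha] at hsB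
    split_ifs at hsB <;> omega

end SimpleReflections

section SignedPermutations

theorem odd_inv {w : Equiv.Perm ℤ} (hw : Function.Odd w) : Function.Odd ⇑w⁻¹ := by
  intro i
  rw [Equiv.Perm.inv_eq_iff_eq, hw, Equiv.Perm.coe_inv, Equiv.apply_symm_apply]

theorem wordProd_nil : wordProd [] = 1 := rfl

theorem wordProd_singleton (a : ℕ) : wordProd [a] = sB a := by
  simp only [wordProd, List.map_cons, List.map_nil, List.prod_singleton]

theorem wordProd_cons (a : ℕ) (L : List ℕ) : wordProd (a :: L) = sB a * wordProd L := by
  simp only [wordProd, List.map_cons, List.prod_cons]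

theorem wordProd_append (L M : List ℕ) : wordProd (L ++ M) = wordProd L * wordProd M := by
  simp only [wordProd, List.map_append, List.prod_append]

theorem wordProd_reverse (L : List ℕ) : wordProd L.reverse = (wordProd L)⁻¹ := by
  induction L with
  | nil => rfl
  | cons a L ih =>
    rw [List.reverse_cons, wordProd_append, ih, wordProd_singleton, wordProd_cons, mul_inv_rev,
      sB_inv]

theorem odd_wordProd (L : List ℕ) : Function.Odd (wordProd L) := by
  induction L with
  | nil => exact fun _ => rfl
  | cons a L ih => intro i; rw [wordProd_cons, Equiv.Perm.mul_apply, ih, odd_sB]; rfl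

theorem wordProd_apply_of_lt_abs {n : ℕ} {L : List ℕ} (hL : ∀ a ∈ L, a < n) {i : ℤ}
    (hi : (n : ℤ) < |i|) : wordProd L i = i := by
  induction L with
  | nil => rfl
  | cons a L ih =>
    have ha : a < n := hL a List.mem_cons_self
    rw [wordProd_cons, Equiv.Perm.mul_apply, ih fun b hb => hL b (List.mem_cons_of_mem a hb),
      sB_apply_of_lt_abs (by omega)]

theorem isSignedPerm_wordProd {n : ℕ} {L : List ℕ} (hL : ∀ a ∈ L, a < n) :
    IsSignedPerm n (wordProd L) :=
  ⟨odd_wordProd L, fun _ hi => wordProd_apply_of_lt_abs hL hi⟩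

theorem eq_of_odd_of_eq_of_pos {f g : ℤ → ℤ} (hf : Function.Odd f) (hg : Function.Odd g)
    (h : ∀ i, 0 < i → f i = g i) : f = g := by
  ext i
  rcases lt_trichotomy i 0 with hi | rfl | hi
  · rw [← neg_neg i, hf, hg, h _ (neg_pos.mpr hi)]
  · rw [hf.map_zero, hg.map_zero]
  · exact h i hi

theorem lengthB_le {n : ℕ} {L : List ℕ} (hL : ∀ a ∈ L, a < n) :
    lengthB n (wordProd L) ≤ L.length :=
  Nat.sInf_le ⟨L, hL, rfl, rfl⟩

end SignedPermutations

section Roots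

theorem eVec_neg (k : ℤ) : eVec (-k) = -eVec k := by
  funext t
  simp only [eVec, Pi.neg_apply]
  split_ifs <;> omega

theorem eVec_zero : eVec 0 = 0 := by
  funext t
  simp only [eVec, neg_zero, Pi.zero_apply]
  split_ifs <;> rfl

theorem eVec_injective : Function.Injective eVec := by
  intro a b h
  have ha := congrFun h a
  have hb := congrFun h b
  simp only [eVec] at ha hb
  split_ifs at ha hb <;> omega

theorem eVec_sub_eVec_neg_comm (x y : ℤ) : eVec (-y) - eVec (-x) = eVec x - eVec y := by
  rw [eVec_neg, eVec_neg]
  abel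

theorem eq_or_eq_neg_of_eVec_sub_eq {a b x y : ℤ} (hx : x ≠ 0) (hxy : x ≠ y) (hxy' : x ≠ -y)
    (h : eVec a - eVec b = eVec x - eVec y) : a = x ∨ b = -x := by
  have hx := congrFun h x
  simp only [eVec, Pi.sub_apply] at hx
  split_ifs at hx <;> omega

theorem eVec_sub_eVec_inj {a b x y : ℤ} (hx : x ≠ 0) (hxy : x ≠ y) (hxy' : x ≠ -y)
    (h : eVec a - eVec b = eVec x - eVec y) : (a = x ∧ b = y) ∨ (a = -y ∧ b = -x) := by
  rcases eq_or_eq_neg_of_eVec_sub_eq hx hxy hxy' h with rfl | rfl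
  · exact .inl ⟨rfl, eVec_injective (sub_right_injective h)⟩
  · rw [← eVec_sub_eVec_neg_comm x] at h
    exact .inr ⟨eVec_injective (sub_left_injective h), rfl⟩

theorem actB_eVec {w : Equiv.Perm ℤ} (hw : Function.Odd w) (k : ℤ) :
    actB w (eVec k) = eVec (w k) := by
  funext t
  have hzero : w⁻¹ t = 0 ↔ t = 0 := by rw [Equiv.Perm.inv_eq_iff_eq, hw.map_zero]
  have hpos : w⁻¹ t = k ↔ t = w k := Equiv.Perm.inv_eq_iff_eq
  have hneg : w⁻¹ t = -k ↔ t = -w k := by rw [Equiv.Perm.inv_eq_iff_eq, hw]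
  simp only [actB, eVec, hzero, hpos, hneg]

theorem alphaRoot_eq (a : ℕ) : alphaRoot a = eVec (a + 1) - eVec a := by
  rcases eq_or_ne a 0 with rfl | ha
  · simp only [alphaRoot, if_true, Nat.cast_zero, zero_add, eVec_zero, sub_zero]
  · simp only [alphaRoot, ha, if_false]

theorem reflOrder_eq (L : List ℕ) (t : ℕ) :
    reflOrder L t = eVec (wordProd (L.take t) (L.getD t 0 + 1)) -
      eVec (wordProd (L.take t) (L.getD t 0)) := by
  rw [reflOrder, alphaRoot_eq, ← actB_eVec (odd_wordProd _), ← actB_eVec (odd_wordProd _)]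
  rfl

end Roots

section Positions

/-- `pos L t x` is the place of the letter `x` in the one-line notation of
`s_{a_1} ⋯ s_{a_t}`, where `L = (a_1, a_2, …)`. -/
def pos (L : List ℕ) (t : ℕ) : Equiv.Perm ℤ := (wordProd (L.take t))⁻¹

variable {L : List ℕ} {t : ℕ} {x y : ℤ}

theorem pos_length (L : List ℕ) : pos L L.length = (wordProd L)⁻¹ := by
  rw [pos, List.take_length]

theorem odd_pos (L : List ℕ) (t : ℕ) : Function.Odd (pos L t) := odd_inv (odd_wordProd _)

theorem pos_eq_iff {k : ℤ} : pos L t x = k ↔ wordProd (L.take t) k = x := by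
  rw [pos, Equiv.Perm.inv_eq_iff_eq, eq_comm]

theorem pos_ne_neg (h : x ≠ -y) : pos L t x ≠ -pos L t y := by
  rw [← odd_pos]
  exact (pos L t).injective.ne h

theorem pos_succ (ht : t < L.length) (x : ℤ) : pos L (t + 1) x = sB (L.getD t 0) (pos L t x) := by
  rw [pos, List.take_succ_eq_append_getElem ht, wordProd_append, wordProd_singleton, mul_inv_rev,
    sB_inv, List.getD_eq_getElem _ _ ht]
  rfl

theorem pos_eq_sB_pos_succ (ht : t < L.length) (x : ℤ) :
    pos L t x = sB (L.getD t 0) (pos L (t + 1) x) := by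
  rw [pos_succ ht, sB_sB]

theorem pos_eq_of_lt_of_gt (ht : t < L.length) (hne : x ≠ -y) (hlt : pos L t y < pos L t x)
    (hgt : pos L (t + 1) x < pos L (t + 1) y) :
    (pos L t x = L.getD t 0 + 1 ∧ pos L t y = L.getD t 0) ∨
      (pos L t x = -L.getD t 0 ∧ pos L t y = -(L.getD t 0 + 1)) := by
  rw [pos_succ ht, pos_succ ht] at hgt
  exact eq_of_sB_lt_sB (pos_ne_neg hne) hlt hgt

theorem pos_succ_eq_of_lt_of_gt (ht : t < L.length) (hne : x ≠ -y) (hlt : pos L t y < pos L t x)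
    (hgt : pos L (t + 1) x < pos L (t + 1) y) :
    (pos L (t + 1) x = L.getD t 0 ∧ pos L (t + 1) y = L.getD t 0 + 1) ∨
      (pos L (t + 1) x = -(L.getD t 0 + 1) ∧ pos L (t + 1) y = -L.getD t 0) := by
  rw [pos_eq_sB_pos_succ ht, pos_eq_sB_pos_succ ht] at hlt
  have hne' : y ≠ -x := fun h => hne (by rw [h, neg_neg])
  exact (eq_of_sB_lt_sB (pos_ne_neg hne') hgt hlt).imp And.symm And.symm

theorem reflOrder_eq_of_lt_of_gt (ht : t < L.length) (hne : x ≠ -y) (hlt : pos L t y < pos L t x)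
    (hgt : pos L (t + 1) x < pos L (t + 1) y) : reflOrder L t = eVec x - eVec y := by
  rw [reflOrder_eq]
  rcases pos_eq_of_lt_of_gt ht hne hlt hgt with ⟨hx, hy⟩ | ⟨hx, hy⟩
  · rw [pos_eq_iff] at hx hy
    rw [hx, hy]
  · rw [pos_eq_iff, odd_wordProd] at hx hy
    rw [← hx, ← hy, eVec_sub_eVec_neg_comm]

end Positions

section Labels

/-- The second index of the root attached to column `c` of `Z(d,r)`: the label of `(i, c)` is
`e_{d+1-i} - e_{colIndex d r c}`. -/
def colIndex (d r : ℕ) (c : ℤ) : ℤ := if c ≤ 0 then c else if c ≤ r then -(c + d) else c - r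

variable {d r : ℕ} {p q : ℤ × ℤ}

theorem fLabel_eq (d r : ℕ) (p : ℤ × ℤ) :
    fLabel d r p = eVec (d + 1 - p.1) - eVec (colIndex d r p.2) := by
  unfold fLabel colIndex
  split_ifs
  · rfl
  · rw [eVec_neg, sub_neg_eq_add]
  · rfl

theorem mem_diagram_Zlam :
    p ∈ Diagram d (Zlam d r) ↔ 1 ≤ p.1 ∧ p.1 ≤ d ∧ p.1 - d ≤ p.2 ∧ p.2 ≤ r + d - p.1 := by
  simp only [Diagram, Zlam, Set.mem_ofPred_eq]
  omega

theorem colIndex_injOn (d r : ℕ) : Set.InjOn (colIndex d r) (Set.Ici (-d : ℤ)) := by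
  intro c hc c' hc' h
  rw [Set.mem_Ici] at hc hc'
  unfold colIndex at h
  split_ifs at h <;> omega

theorem colIndex_lt (hp : p ∈ Diagram d (Zlam d r)) : colIndex d r p.2 < d + 1 - p.1 := by
  rw [mem_diagram_Zlam] at hp
  unfold colIndex
  split_ifs <;> omega

theorem ne_neg_colIndex (hp : p ∈ Diagram d (Zlam d r)) :
    (d + 1 - p.1 : ℤ) ≠ -colIndex d r p.2 := by
  rw [mem_diagram_Zlam] at hp
  unfold colIndex
  split_ifs <;> omega

theorem eVec_sub_eVec_eq_fLabel {a b : ℤ} (hp : p ∈ Diagram d (Zlam d r))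
    (h : eVec a - eVec b = fLabel d r p) :
    (a = d + 1 - p.1 ∧ b = colIndex d r p.2) ∨ (a = -colIndex d r p.2 ∧ b = -(d + 1 - p.1)) := by
  have hrow := mem_diagram_Zlam.mp hp
  rw [fLabel_eq] at h
  exact eVec_sub_eVec_inj (by omega) (colIndex_lt hp).ne' (ne_neg_colIndex hp) h

theorem fLabel_injOn (d r : ℕ) : Set.InjOn (fLabel d r) (Diagram d (Zlam d r)) := by
  intro p hp q hq h
  have hp' := mem_diagram_Zlam.mp hp
  have hq' := mem_diagram_Zlam.mp hq
  rw [fLabel_eq] at h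
  rcases eVec_sub_eVec_eq_fLabel hq h with ⟨hrow, hcol⟩ | ⟨hrow, hcol⟩
  · exact Prod.ext (by omega) (colIndex_injOn d r (Set.mem_Ici.mpr (by omega))
      (Set.mem_Ici.mpr (by omega)) hcol)
  · unfold colIndex at hrow hcol
    split_ifs at hrow hcol <;> omega

end Labels

section Diagrams

theorem diagram_eq_image (d : ℕ) (lam : ℕ → ℕ) : Diagram d lam =
    ((Finset.Icc 1 d).sigma fun i => Finset.range (lam i)).image
      fun b => ((b.1 : ℤ), (b.1 : ℤ) - d + b.2) := by
  ext ⟨i, c⟩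
  simp only [Diagram, Set.mem_ofPred_eq, Finset.coe_image, Set.mem_image, Finset.mem_coe,
    Finset.mem_sigma, Finset.mem_Icc, Finset.mem_range, Prod.mk.injEq, Sigma.exists]
  constructor
  · rintro ⟨h₁, h₂, h₃, h₄⟩
    exact ⟨i.toNat, (c + d - i).toNat, by omega⟩
  · rintro ⟨j, k, ⟨hj, hk⟩, rfl, rfl⟩
    rw [Int.toNat_natCast]
    omega

theorem ncard_diagram (d : ℕ) (lam : ℕ → ℕ) : (Diagram d lam).ncard = sizeP d lam := by
  rw [diagram_eq_image, Set.ncard_coe_finset, Finset.card_image_of_injective, Finset.card_sigma]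
  · simp only [Finset.card_range, sizeP]
  · rintro ⟨i, j⟩ ⟨i', j'⟩ h
    simp only [Prod.mk.injEq] at h
    obtain ⟨rfl, rfl⟩ : i = i' ∧ j = j' := by omega
    rfl

end Diagrams

section LongWord

theorem rowWord_sub {d k : ℕ} (r : ℕ) (hk : k ≤ d) :
    rowWord d r (d - k) = (List.range' (r + 1) k).reverse ++ 0 :: List.range' 1 (r + k) := by
  refine List.ext_getElem ?_ fun t h₁ h₂ => ?_
  · simp only [rowWord, List.length_map, List.length_range, List.length_append,
      List.length_reverse, List.length_range', List.length_cons]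
    omega
  · simp only [rowWord, List.getElem_map, List.getElem_range, List.getElem_append,
      List.length_reverse, List.length_range', List.getElem_reverse, List.getElem_range', one_mul,
      List.getElem_cons, dite_eq_ite]
    split_ifs <;> omega

theorem rowWord_zero (d r : ℕ) :
    rowWord d r 0 = (List.range' (r + 1) d).reverse ++ 0 :: List.range' 1 (r + d) := by
  have h := rowWord_sub r (le_refl d)
  rwa [Nat.sub_self] at h

theorem flatMap_range_succ {α : Type*} (f : ℕ → List α) (n : ℕ) :
    (List.range (n + 1)).flatMap f = (List.range n).flatMap f ++ f n := by
  rw [List.range_succ, List.flatMap_append, List.flatMap_singleton]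

theorem piWord_eq_flatMap (d r : ℕ) : piWord d r =
    (List.range d).flatMap fun k =>
      (List.range' (r + 1) k).reverse ++ 0 :: List.range' 1 (r + k) :=
  List.flatMap_congr fun _ hk => rowWord_sub r (List.mem_range.mp hk).le

theorem piWord_succ (d r : ℕ) : piWord (d + 1) r = piWord d r ++ rowWord d r 0 := by
  rw [rowWord_zero, piWord_eq_flatMap, piWord_eq_flatMap, flatMap_range_succ]

theorem lt_of_mem_piWord {d r a : ℕ} (ha : a ∈ piWord d r) : a < d + r := by
  rw [piWord_eq_flatMap] at ha
  simp only [List.mem_flatMap, List.mem_range, List.mem_append, List.mem_reverse, List.mem_cons,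
    List.mem_range'_1] at ha
  omega

theorem length_piWord (d r : ℕ) : (piWord d r).length = sizeP d (Zlam d r) := by
  have hlen : (piWord d r).length = ∑ k ∈ Finset.range d, (r + 2 * k + 1) := by
    induction d with
    | zero => rfl
    | succ d ih =>
      rw [piWord_succ, List.length_append, ih, Finset.sum_range_succ, rowWord, List.length_map,
        List.length_range]
      rfl
  rw [hlen, sizeP]
  refine Finset.sum_nbij' (d - ·) (d - ·) ?_ ?_ ?_ ?_ ?_ <;>
    simp only [Finset.mem_range, Finset.mem_Icc, Zlam] <;> omega

theorem wordProd_range'_apply {s : ℕ} (hs : 1 ≤ s) (n : ℕ) {i : ℤ} (hi : 0 < i) :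
    wordProd (List.range' s n) i =
      if i = s + n then (s : ℤ) else if s ≤ i ∧ i < s + n then i + 1 else i := by
  induction n generalizing s with
  | zero =>
    rw [List.range'_zero, wordProd_nil, Equiv.Perm.one_apply]
    split_ifs <;> omega
  | succ n ih =>
    rw [List.range'_succ, wordProd_cons, Equiv.Perm.mul_apply, ih (by omega),
      sB_apply_of_ne_zero (by omega)]
    split_ifs <;> omega

theorem wordProd_reverse_range'_apply {s : ℕ} (hs : 1 ≤ s) (n : ℕ) {i : ℤ} (hi : 0 < i) :
    wordProd (List.range' s n).reverse i =
      if i = s then (s : ℤ) + n else if s < i ∧ i ≤ s + n then i - 1 else i := by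
  rw [wordProd_reverse, Equiv.Perm.inv_eq_iff_eq, wordProd_range'_apply hs n]
  all_goals split_ifs <;> omega

theorem IsWdr.eq {d r : ℕ} {v w : Equiv.Perm ℤ} (hv : IsWdr d r v) (hw : IsWdr d r w) :
    v = w := by
  obtain ⟨⟨hvodd, hvfix⟩, hvle, hvgt⟩ := hv
  obtain ⟨⟨hwodd, hwfix⟩, hwle, hwgt⟩ := hw
  refine DFunLike.coe_injective (eq_of_odd_of_eq_of_pos hvodd hwodd fun i hi => ?_)
  rcases le_or_gt i r with hir | hri
  · rw [hvle i hi hir, hwle i hi hir]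
  · rcases le_or_gt i (d + r) with hid | hdi
    · rw [hvgt i hri hid, hwgt i hri hid]
    · have : ((d + r : ℕ) : ℤ) < |i| := by rw [abs_of_pos hi]; exact_mod_cast hdi
      rw [hvfix i this, hwfix i this]

theorem wordProd_rowWord_zero_eq (d r : ℕ) : wordProd (rowWord d r 0) =
    wordProd (List.range' (r + 1) d).reverse * (sB 0 * wordProd (List.range' 1 (r + d))) := by
  rw [rowWord_zero, wordProd_append, wordProd_cons]

theorem wordProd_rowWord_zero_apply_of_le {d r : ℕ} {i : ℤ} (hi : 0 < i) (hi' : i ≤ d + r) :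
    wordProd (rowWord d r 0) i =
      if i < r then i + 1 else if i = r then (d : ℤ) + r + 1 else i := by
  rw [wordProd_rowWord_zero_eq, Equiv.Perm.mul_apply, Equiv.Perm.mul_apply,
    wordProd_range'_apply le_rfl _ hi, if_neg (by omega), if_pos (by omega),
    sB_zero_apply, if_neg (by omega), if_neg (by omega),
    wordProd_reverse_range'_apply (by omega) _ (by omega)]
  split_ifs <;> omega

theorem wordProd_rowWord_zero_apply_last (d r : ℕ) :
    wordProd (rowWord d r 0) (d + r + 1) = if r = 0 then -(d + 1 : ℤ) else -1 := by
  rw [wordProd_rowWord_zero_eq, Equiv.Perm.mul_apply, Equiv.Perm.mul_apply,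
    wordProd_range'_apply le_rfl _ (by omega), if_pos (by omega), Nat.cast_one, sB_zero_apply,
    if_pos rfl, odd_wordProd, wordProd_reverse_range'_apply (by omega) _ one_pos]
  split_ifs <;> omega

theorem isWdr_wordProd_piWord (d r : ℕ) : IsWdr d r (wordProd (piWord d r)) := by
  refine ⟨isSignedPerm_wordProd fun _ => lt_of_mem_piWord, ?_⟩
  induction d with
  | zero => exact ⟨fun i _ _ => (zero_add i).symm, fun i _ _ => by omega⟩
  | succ d ih =>
    obtain ⟨ihle, ihgt⟩ := ih
    have hodd := odd_wordProd (piWord d r)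
    have hfix : wordProd (piWord d r) (d + r + 1) = d + r + 1 :=
      wordProd_apply_of_lt_abs (fun _ => lt_of_mem_piWord) (by rw [abs_of_pos] <;> omega)
    rw [piWord_succ, wordProd_append]
    constructor <;> intro i h₁ h₂ <;> rw [Equiv.Perm.mul_apply]
    · rw [wordProd_rowWord_zero_apply_of_le (by omega) (by omega)]
      split_ifs
      · rw [ihle _ (by omega) (by omega)]; omega
      · rw [hfix]; omega
      · omega
    · rcases (show i ≤ d + r ∨ i = d + r + 1 by omega) with hi | rfl
      · rw [wordProd_rowWord_zero_apply_of_le (by omega) hi, if_neg (by omega), if_neg (by omega),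
          ihgt _ h₁ hi]
      · rw [wordProd_rowWord_zero_apply_last]
        split_ifs with hr
        · subst hr
          rw [Nat.cast_zero, add_zero] at hfix
          rw [hodd, hfix]; omega
        · rw [hodd, ihle 1 le_rfl (by omega)]; omega

theorem IsReducedWord.length_le {d r : ℕ} {w : Equiv.Perm ℤ} {L : List ℕ} (hw : IsWdr d r w)
    (hL : IsReducedWord (d + r) w L) : L.length ≤ sizeP d (Zlam d r) := by
  rw [hL.2.2, hw.eq (isWdr_wordProd_piWord d r), ← length_piWord]
  exact lengthB_le fun _ => lt_of_mem_piWord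

end LongWord

section ReflectionTableaux

theorem exists_lt_and_not_succ {P : ℕ → Prop} {n : ℕ} (h₀ : P 0) (hn : ¬P n) :
    ∃ t < n, P t ∧ ¬P (t + 1) := by
  by_contra! h
  have hP : ∀ t ≤ n, P t := by
    intro t
    induction t with
    | zero => exact fun _ => h₀
    | succ t ih => exact fun ht => h t ht (ih (by omega))
  exact hn (hP n le_rfl)

theorem IsWdr.inv_apply_le {d r : ℕ} {w : Equiv.Perm ℤ} (hw : IsWdr d r w) {x : ℤ} (hx : 1 ≤ x)
    (hxd : x ≤ d) : w⁻¹ x = -(x + r) := by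
  rw [Equiv.Perm.inv_eq_iff_eq, hw.1.1, hw.2.2 (x + r) (by omega) (by omega)]
  omega

theorem IsWdr.inv_apply_add {d r : ℕ} {w : Equiv.Perm ℤ} (hw : IsWdr d r w) {c : ℤ} (hc : 1 ≤ c)
    (hcr : c ≤ r) : w⁻¹ (d + c) = c := by
  rw [Equiv.Perm.inv_eq_iff_eq, hw.2.1 c hc hcr]

theorem IsWdr.apply_one_eq {d r : ℕ} (hd : 1 ≤ d) {w : Equiv.Perm ℤ} (hw : IsWdr d r w) :
    w 1 = d + 1 ∨ w 1 = -1 := by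
  rcases Nat.eq_zero_or_pos r with rfl | hr
  · exact .inr (hw.2.2 1 (by simp only [Nat.cast_zero, zero_lt_one]) (by omega))
  · exact .inl (hw.2.1 1 le_rfl (by omega))

/-- `B` is the filling `B_a` of `Z(d,r)` attached to a word `a = L` for `w^{(d,r)}` whose
reflection order runs once through the labels of `Z(d,r)`: the entry of a box is the time,
counted from `1`, at which its label occurs. -/
structure IsReflectionTableau (d r : ℕ) (L : List ℕ) (B : ℤ × ℤ → ℕ) : Prop where
  isWdr : IsWdr d r (wordProd L)
  length_eq : L.length = sizeP d (Zlam d r)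
  bijOn : Set.BijOn B (Diagram d (Zlam d r)) (Set.Icc 1 L.length)
  reflOrder_eq : ∀ p ∈ Diagram d (Zlam d r), reflOrder L (B p - 1) = fLabel d r p

variable {d r : ℕ} {L : List ℕ} {B : ℤ × ℤ → ℕ}

theorem reflOrder_length (L : List ℕ) : reflOrder L L.length = eVec (wordProd L 1) := by
  rw [BST.reflOrder_eq, List.take_length, List.getD_eq_default _ _ le_rfl, Nat.cast_zero, zero_add,
    (odd_wordProd L).map_zero, eVec_zero, sub_zero]

theorem reflOrder_length_ne_fLabel (hw : IsWdr d r (wordProd L)) {p : ℤ × ℤ}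
    (hp : p ∈ Diagram d (Zlam d r)) : reflOrder L L.length ≠ fLabel d r p := by
  intro h
  have hrow := mem_diagram_Zlam.mp hp
  rw [reflOrder_length, ← sub_zero (eVec _), ← eVec_zero] at h
  have := hw.apply_one_eq (by omega)
  rcases eVec_sub_eVec_eq_fLabel hp h with ⟨h₁, -⟩ | ⟨-, h₂⟩ <;> omega

theorem bijOn_of_reflOrder_eq (hB : ∀ p ∈ Diagram d (Zlam d r),
      1 ≤ B p ∧ B p ≤ sizeP d (Zlam d r) ∧ reflOrder L (B p - 1) = fLabel d r p) :
    Set.BijOn B (Diagram d (Zlam d r)) (Set.Icc 1 (sizeP d (Zlam d r))) := by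
  have hmaps : Set.MapsTo B (Diagram d (Zlam d r)) (Set.Icc 1 (sizeP d (Zlam d r))) :=
    fun p hp => ⟨(hB p hp).1, (hB p hp).2.1⟩
  have hinj : Set.InjOn B (Diagram d (Zlam d r)) := fun p hp q hq h =>
    fLabel_injOn d r hp hq (by rw [← (hB p hp).2.2, ← (hB q hq).2.2, h])
  refine ⟨hmaps, hinj, (Set.eq_of_subset_of_ncard_le hmaps.image_subset ?_).ge⟩
  rw [hinj.ncard_image, ncard_diagram, ← Finset.coe_Icc, Set.ncard_coe_finset, Nat.card_Icc,
    Nat.add_sub_cancel]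

theorem IsReducedWord.isReflectionTableau {w : Equiv.Perm ℤ} (hw : IsWdr d r w)
    (hL : IsReducedWord (d + r) w L)
    (hB : ∀ p ∈ Diagram d (Zlam d r),
      1 ≤ B p ∧ B p ≤ sizeP d (Zlam d r) ∧ reflOrder L (B p - 1) = fLabel d r p) :
    IsReflectionTableau d r L B := by
  have hbij := bijOn_of_reflOrder_eq hB
  have hwL : IsWdr d r (wordProd L) := hL.2.1 ▸ hw
  have hlen : L.length = sizeP d (Zlam d r) := by
    refine (hL.length_le hw).antisymm (not_lt.mp fun hlt => ?_)
    obtain ⟨p, hp, hBp⟩ := hbij.surjOn (show L.length + 1 ∈ Set.Icc 1 _ from ⟨by omega, hlt⟩)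
    refine reflOrder_length_ne_fLabel hwL hp ?_
    rw [← (hB p hp).2.2, hBp, Nat.add_sub_cancel]
  exact ⟨hwL, hlen, hlen ▸ hbij, fun p hp => (hB p hp).2.2⟩

namespace IsReflectionTableau

variable (hT : IsReflectionTableau d r L B)
include hT

theorem pos_length_of_le {x : ℤ} (hx : 1 ≤ x) (hxd : x ≤ d) : pos L L.length x = -(x + r) := by
  rw [pos_length, hT.isWdr.inv_apply_le hx hxd]

theorem pos_length_add {c : ℤ} (hc : 1 ≤ c) (hcr : c ≤ r) : pos L L.length (d + c) = c := by
  rw [pos_length, hT.isWdr.inv_apply_add hc hcr]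

theorem apply_mem_Icc {p : ℤ × ℤ} (hp : p ∈ Diagram d (Zlam d r)) : B p ∈ Set.Icc 1 L.length :=
  hT.bijOn.mapsTo hp

theorem exists_apply_eq {t : ℕ} (ht : t < L.length) :
    ∃ p ∈ Diagram d (Zlam d r), B p = t + 1 :=
  hT.bijOn.surjOn ⟨by omega, ht⟩

theorem reflOrder_eq_fLabel {p : ℤ × ℤ} {t : ℕ} (hp : p ∈ Diagram d (Zlam d r))
    (h : B p = t + 1) : reflOrder L t = fLabel d r p := by
  rw [← hT.reflOrder_eq p hp, h, Nat.add_sub_cancel]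

theorem pos_lt_of_pos_succ_lt {x y : ℤ} (hyx : y < x) (hne : x ≠ -y) {t : ℕ} (ht : t < L.length)
    (h : pos L (t + 1) y < pos L (t + 1) x) : pos L t y < pos L t x := by
  by_contra hlt
  have hlt' : pos L t x < pos L t y :=
    (not_lt.mp hlt).lt_of_ne ((pos L t).injective.ne hyx.ne')
  have hroot := reflOrder_eq_of_lt_of_gt ht (by omega : y ≠ -x) hlt' h
  obtain ⟨q, hq, hBq⟩ := hT.exists_apply_eq ht
  rw [hT.reflOrder_eq_fLabel hq hBq] at hroot
  have := colIndex_lt hq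
  rcases eVec_sub_eVec_eq_fLabel hq hroot.symm with ⟨h₁, h₂⟩ | ⟨h₁, h₂⟩ <;> omega

theorem pos_lt_of_le {x y : ℤ} (hyx : y < x) (hne : x ≠ -y) {s t : ℕ} (hst : s ≤ t)
    (ht : t ≤ L.length) (h : pos L t y < pos L t x) : pos L s y < pos L s x := by
  induction t, hst using Nat.le_induction with
  | base => exact h
  | succ t _ ih => exact ih (by omega) (hT.pos_lt_of_pos_succ_lt hyx hne ht h)

theorem eq_apply_of_lt_of_gt {p : ℤ × ℤ} (hp : p ∈ Diagram d (Zlam d r)) {t : ℕ}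
    (ht : t < L.length) (hlt : pos L t (colIndex d r p.2) < pos L t (d + 1 - p.1))
    (hgt : pos L (t + 1) (d + 1 - p.1) < pos L (t + 1) (colIndex d r p.2)) : B p = t + 1 := by
  have hroot := reflOrder_eq_of_lt_of_gt ht (ne_neg_colIndex hp) hlt hgt
  obtain ⟨q, hq, hBq⟩ := hT.exists_apply_eq ht
  rw [hT.reflOrder_eq_fLabel hq hBq, ← fLabel_eq] at hroot
  rw [← hBq, fLabel_injOn d r hq hp hroot]

theorem pos_colIndex_length_gt {p : ℤ × ℤ} (hp : p ∈ Diagram d (Zlam d r)) :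
    pos L L.length (d + 1 - p.1) < pos L L.length (colIndex d r p.2) := by
  rw [mem_diagram_Zlam] at hp
  have hneg : ∀ c : ℤ, pos L L.length c = -pos L L.length (-c) := fun c => by
    rw [odd_pos, neg_neg]
  rw [hT.pos_length_of_le (by omega) (by omega)]
  unfold colIndex
  split_ifs with h₁ h₂
  · rcases h₁.eq_or_lt with h | h
    · rw [h, (odd_pos _ _).map_zero]; omega
    · rw [hneg, hT.pos_length_of_le (by omega) (by omega)]; omega
  · rw [odd_pos, add_comm p.2, hT.pos_length_add (by omega) h₂]; omega
  · rw [hT.pos_length_of_le (by omega) (by omega)]; omega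

theorem exists_lt_of_gt {p : ℤ × ℤ} (hp : p ∈ Diagram d (Zlam d r)) :
    ∃ t < L.length, B p = t + 1 ∧ pos L t (colIndex d r p.2) < pos L t (d + 1 - p.1) ∧
      pos L (t + 1) (d + 1 - p.1) < pos L (t + 1) (colIndex d r p.2) := by
  obtain ⟨t, ht, hlt, hge⟩ := exists_lt_and_not_succ
    (P := fun t => pos L t (colIndex d r p.2) < pos L t (d + 1 - p.1)) (colIndex_lt hp)
    (hT.pos_colIndex_length_gt hp).not_gt
  have hgt := (not_lt.mp hge).lt_of_ne ((pos L (t + 1)).injective.ne (colIndex_lt hp).ne')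
  exact ⟨t, ht, hT.eq_apply_of_lt_of_gt hp ht hlt hgt, hlt, hgt⟩

theorem pos_colIndex_lt_iff {p : ℤ × ℤ} (hp : p ∈ Diagram d (Zlam d r)) {s : ℕ}
    (hs : s ≤ L.length) :
    pos L s (colIndex d r p.2) < pos L s (d + 1 - p.1) ↔ s < B p := by
  obtain ⟨t, ht, hBp, hlt, hgt⟩ := hT.exists_lt_of_gt hp
  have hanti {u v : ℕ} (huv : u ≤ v) (hv : v ≤ L.length) :=
    hT.pos_lt_of_le (colIndex_lt hp) (ne_neg_colIndex hp) huv hv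
  rw [hBp]
  exact ⟨fun h => not_le.mp fun hts => hgt.not_gt (hanti hts hs h),
    fun h => hanti (Nat.lt_succ_iff.mp h) ht.le hlt⟩

theorem pos_apply_eq {p : ℤ × ℤ} (hp : p ∈ Diagram d (Zlam d r)) {t : ℕ} (hBp : B p = t + 1) :
    (pos L (t + 1) (d + 1 - p.1) = L.getD t 0 ∧
        pos L (t + 1) (colIndex d r p.2) = L.getD t 0 + 1) ∨
      (pos L (t + 1) (d + 1 - p.1) = -(L.getD t 0 + 1) ∧
        pos L (t + 1) (colIndex d r p.2) = -L.getD t 0) := by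
  obtain ⟨u, hu, hBp', hlt, hgt⟩ := hT.exists_lt_of_gt hp
  obtain rfl : t = u := by omega
  exact pos_succ_eq_of_lt_of_gt hu (ne_neg_colIndex hp) hlt hgt

theorem pos_colIndex_apply {p : ℤ × ℤ} (hp : p ∈ Diagram d (Zlam d r)) :
    pos L (B p) (colIndex d r p.2) = pos L (B p) (d + 1 - p.1) + 1 := by
  obtain ⟨t, -, hBp, -, -⟩ := hT.exists_lt_of_gt hp
  rw [hBp]
  rcases hT.pos_apply_eq hp hBp with h | h <;> omega

theorem pos_lt_of_lt_add {c b : ℤ} (hc : 1 ≤ c) (hcr : c ≤ r) (hb : 0 ≤ b) (hbc : b < d + c)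
    {s : ℕ} (hs : s ≤ L.length) : pos L s b < pos L s (d + c) := by
  refine hT.pos_lt_of_le hbc (by omega) hs le_rfl ?_
  rw [hT.pos_length_add hc hcr]
  rcases le_or_gt b d with hbd | hdb
  · rcases hb.eq_or_lt with rfl | hb
    · rw [(odd_pos _ _).map_zero]; omega
    · rw [hT.pos_length_of_le (by omega) hbd]; omega
  · rw [← add_sub_cancel (d : ℤ) b, hT.pos_length_add (by omega) (by omega)]; omega

end IsReflectionTableau

end ReflectionTableaux

section Hooks

variable {d r : ℕ} {p q : ℤ × ℤ}

theorem extHook_subset_extDiagram {lam : ℕ → ℕ} (hp : p ∈ Diagram d lam) :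
    ExtHook d lam p.1 p.2 ⊆ ExtDiagram d lam := by
  rintro q (((rfl | ⟨hq, -⟩) | ⟨hq, -⟩) | ⟨hneg, rfl⟩)
  · exact .inl hp
  · exact .inl hq
  · exact .inl hq
  · obtain ⟨h₁, -, h₃, -⟩ := hp
    exact .inr ⟨by omega, by omega, by omega⟩

/-- The box of the extended hook of `(i, c)` in `Z(d,r)`, outside row `i`, whose label is
complementary to that of `(i, m)`: the two labels add up to the label of `(i, c)`. It lies in
column `c` or in row `d + 1 + c`, and there is none when `1 ≤ m ≤ r`. -/
def legBox (d r : ℕ) (c m : ℤ) : ℤ × ℤ :=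
  if r - c ≤ m then (r + d + 1 - m, c) else (d + 1 + c, if m = 0 then 0 else r - m)

theorem mem_extHook_Zlam_iff (hp : p ∈ Diagram d (Zlam d r)) :
    q ∈ ExtHook d (Zlam d r) p.1 p.2 ↔ q = p ∨
      (∃ m, (p.2 < m ∧ m ≤ r + d - p.1) ∧ (p.1, m) = q) ∨
      (∃ m, (p.2 < m ∧ m ≤ r + d - p.1) ∧ ¬(1 ≤ m ∧ m ≤ r) ∧ legBox d r p.2 m = q) ∨
      (p.2 < 0 ∧ ∃ m : ℤ, (1 ≤ m ∧ m ≤ r) ∧ ((d + 1 + p.2 : ℤ), m) = q) := by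
  obtain ⟨i, c⟩ := p
  obtain ⟨j, k⟩ := q
  simp only [ExtHook, Hook, Set.mem_union, Set.mem_ofPred_eq, Set.mem_singleton_iff, legBox,
    mem_diagram_Zlam, Prod.mk.injEq] at hp ⊢
  constructor
  · rintro (((⟨rfl, rfl⟩ | ⟨hq, ⟨rfl, hck⟩ | ⟨rfl, hij⟩⟩) | ⟨hq, hc, rfl⟩) | ⟨hc, rfl, rfl⟩)
    · exact .inl ⟨rfl, rfl⟩
    · exact .inr (.inl ⟨k, ⟨hck, by omega⟩, rfl, rfl⟩)
    · exact .inr (.inr (.inl ⟨r + d + 1 - j, by omega, by omega, by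
        rw [if_pos (by omega)]; exact Prod.ext (by omega) rfl⟩))
    · by_cases hk : 1 ≤ k ∧ k ≤ r
      · exact .inr (.inr (.inr ⟨hc, k, hk, rfl, rfl⟩))
      · rcases eq_or_ne k 0 with rfl | hk₀
        · exact .inr (.inr (.inl ⟨0, by omega, by omega, by
            rw [if_neg (by omega), if_pos rfl]⟩))
        · exact .inr (.inr (.inl ⟨r - k, by omega, by omega, by
            rw [if_neg (by omega), if_neg (by omega), sub_sub_cancel]⟩))
    · exact .inr (.inr (.inl ⟨r - k, by omega, by omega, by
        rw [if_pos le_rfl]; exact Prod.ext (by omega) rfl⟩))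
  · rintro (⟨rfl, rfl⟩ | ⟨m, hm, rfl, rfl⟩ | ⟨m, hm, hmr, h⟩ | ⟨hc, m, hm, rfl, rfl⟩)
    · omega
    · omega
    · split_ifs at h <;> simp only [Prod.mk.injEq] at h <;> omega
    · omega

theorem pos_legBox_iff {L : List ℕ} {t : ℕ} {c m : ℤ} (hcm : c < m)
    (hm : ¬(1 ≤ m ∧ m ≤ r)) :
    pos L t (colIndex d r (legBox d r c m).2) < pos L t (d + 1 - (legBox d r c m).1) ↔
      pos L t (colIndex d r c) < pos L t (colIndex d r m) := by
  unfold legBox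
  split_ifs with hrc h₀
  · rw [show colIndex d r m = d + 1 - (r + d + 1 - m) by unfold colIndex; split_ifs <;> omega]
  · rw [show colIndex d r m = -colIndex d r 0 by unfold colIndex; split_ifs <;> omega,
      show (d + 1 - (d + 1 + c) : ℤ) = -colIndex d r c by unfold colIndex; split_ifs <;> omega,
      odd_pos, odd_pos, lt_neg]
  · rw [show colIndex d r m = -colIndex d r (r - m) by unfold colIndex; split_ifs <;> omega,
      show (d + 1 - (d + 1 + c) : ℤ) = -colIndex d r c by unfold colIndex; split_ifs <;> omega,
      odd_pos, odd_pos, lt_neg]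

theorem legBox_injOn (r : ℕ) (c : ℤ) :
    Set.InjOn (legBox d r c) {m | c < m ∧ ¬(1 ≤ m ∧ m ≤ r)} := by
  rintro m ⟨hcm, hm⟩ m' ⟨hcm', hm'⟩ h
  unfold legBox at h
  split_ifs at h <;> simp only [Prod.mk.injEq] at h <;> omega

theorem legBox_ne_mk_row (hp : p ∈ Diagram d (Zlam d r)) {m k : ℤ}
    (hm : m ≤ r + d - p.1) : legBox d r p.2 m ≠ (p.1, k) := by
  rw [mem_diagram_Zlam] at hp
  intro h
  unfold legBox at h
  split_ifs at h <;> simp only [Prod.mk.injEq] at h <;> omega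

theorem legBox_ne_mk_of_mem_Icc {c m k : ℤ} (hm : ¬(1 ≤ m ∧ m ≤ r))
    (hc : c < 0) (hk : 1 ≤ k) (hkr : k ≤ r) : legBox d r c m ≠ (d + 1 + c, k) := by
  intro h
  unfold legBox at h
  split_ifs at h <;> simp only [Prod.mk.injEq] at h <;> omega

/-- The boxes of the extended hook of `p` obtained by choosing, from each pair of boxes with
complementary labels, the one in the row of `p` if its column satisfies `P` and the other one
if not, together with the unpaired boxes outside the row of `p`. -/
noncomputable def hookChoice (d r : ℕ) (p : ℤ × ℤ) (P : ℤ → Prop) [DecidablePred P] :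
    Finset (ℤ × ℤ) :=
  ({m ∈ Finset.Ioc p.2 (r + d - p.1) | P m}.image (Prod.mk p.1) ∪
    {m ∈ Finset.Ioc p.2 (r + d - p.1) | ¬P m}.image (legBox d r p.2)) ∪
    (if p.2 < 0 then Finset.Icc 1 (r : ℤ) else ∅).image (Prod.mk (d + 1 + p.2))

theorem card_hookChoice (hp : p ∈ Diagram d (Zlam d r)) {P : ℤ → Prop} [DecidablePred P]
    (hP : ∀ m, p.2 < m → 1 ≤ m → m ≤ r → P m) :
    ((hookChoice d r p P).card : ℤ) = rk d (Zlam d r) p.1 p.2 - 1 := by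
  have hp' := mem_diagram_Zlam.mp hp
  have hnot {m : ℤ} (hpm : p.2 < m) (hm : ¬P m) : ¬(1 ≤ m ∧ m ≤ r) :=
    fun h => hm (hP m hpm h.1 h.2)
  have hinj : Set.InjOn (legBox d r p.2)
      ({m ∈ Finset.Ioc p.2 (r + d - p.1) | ¬P m} : Finset ℤ) := by
    refine (legBox_injOn r p.2).mono fun m hm => ?_
    rw [Finset.mem_coe, Finset.mem_filter, Finset.mem_Ioc] at hm
    exact ⟨hm.1.1, hnot hm.1.1 hm.2⟩
  rw [hookChoice, Finset.card_union_of_disjoint, Finset.card_union_of_disjoint,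
    Finset.card_image_of_injective _ (Prod.mk_right_injective _),
    Finset.card_image_of_injective _ (Prod.mk_right_injective _),
    Finset.card_image_of_injOn hinj, Finset.card_filter_add_card_filter_not]
  · unfold rk Zlam
    split_ifs <;> simp only [Int.card_Icc, Int.card_Ioc, Finset.card_empty] <;> omega
  · simp only [Finset.disjoint_left, Finset.mem_image, Finset.mem_filter, Finset.mem_Ioc]
    rintro _ ⟨k, -, rfl⟩ ⟨m, ⟨hm, -⟩, h⟩
    exact legBox_ne_mk_row hp hm.2 h
  · split_ifs with hc
    · simp only [Finset.disjoint_left, Finset.mem_union, Finset.mem_image, Finset.mem_filter,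
        Finset.mem_Ioc, Finset.mem_Icc]
      rintro _ (⟨m, -, rfl⟩ | ⟨m, ⟨hm, hPm⟩, rfl⟩) ⟨k, hk, h⟩
      · rw [Prod.mk.injEq] at h
        omega
      · exact legBox_ne_mk_of_mem_Icc (hnot hm.1 hPm) hc hk.1 hk.2 h.symm
    · rw [Finset.image_empty]
      exact Finset.disjoint_empty_right _

end Hooks

section Balancedness

namespace IsReflectionTableau

variable {d r : ℕ} {L : List ℕ} {B : ℤ × ℤ → ℕ} (hT : IsReflectionTableau d r L B)
include hT

theorem lt_extFilling_iff {q : ℤ × ℤ} (hq : q ∈ ExtDiagram d (Zlam d r)) {s : ℕ}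
    (hs : s ≤ L.length) : s < ExtFilling d B q ↔
      pos L s (colIndex d r q.2) < pos L s (d + 1 - q.1) := by
  unfold ExtFilling
  split_ifs with hcol
  · have hrow : 1 ≤ q.1 ∧ q.1 ≤ d := by
      rcases hq with hq | hq
      · rw [mem_diagram_Zlam] at hq; omega
      · exact ⟨hq.1, hq.2.1⟩
    have hq₀ : (q.1, 0) ∈ Diagram d (Zlam d r) :=
      mem_diagram_Zlam.mpr ⟨hrow.1, hrow.2, by omega, by omega⟩
    have hiff : pos L s (colIndex d r 0) < pos L s (d + 1 - q.1) ↔ s < B (q.1, 0) :=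
      hT.pos_colIndex_lt_iff hq₀ hs
    rw [show colIndex d r 0 = 0 from if_pos le_rfl, (odd_pos L s).map_zero] at hiff
    rw [← hiff, show colIndex d r q.2 = -(d + 1 - q.1) by unfold colIndex; split_ifs <;> omega,
      odd_pos]
    omega
  · rw [hT.pos_colIndex_lt_iff (hq.resolve_right fun h => hcol h.2.2) hs]

variable {p : ℤ × ℤ} (hp : p ∈ Diagram d (Zlam d r))
include hp

theorem pos_colIndex_lt_of_mem_Icc {m : ℤ} (hm : p.2 < m) (hm₁ : 1 ≤ m) (hmr : m ≤ r) :
    pos L (B p) (colIndex d r m) < pos L (B p) (d + 1 - p.1) := by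
  have hp' := mem_diagram_Zlam.mp hp
  have hadj := hT.pos_colIndex_apply hp
  have hcol : -(d + m) < colIndex d r p.2 ∧ colIndex d r p.2 ≤ 0 := by
    unfold colIndex; split_ifs <;> omega
  have hlt := hT.pos_lt_of_lt_add hm₁ hmr (b := -colIndex d r p.2) (by omega) (by omega)
    (hT.apply_mem_Icc hp).2
  have hne := pos_ne_neg (L := L) (t := B p) (x := d + m) (y := d + 1 - p.1) (by omega)
  rw [odd_pos] at hlt
  rw [show colIndex d r m = -(d + m) by unfold colIndex; split_ifs <;> omega, odd_pos]
  omega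

theorem pos_neg_lt_of_mem_Icc (hc : p.2 < 0) {m : ℤ} (hm₁ : 1 ≤ m) (hmr : m ≤ r) :
    pos L (B p) (colIndex d r m) < pos L (B p) (-p.2) := by
  have hp' := mem_diagram_Zlam.mp hp
  have hadj := hT.pos_colIndex_apply hp
  have hcol : colIndex d r p.2 = p.2 := if_pos hc.le
  have hlt := hT.pos_lt_of_lt_add hm₁ hmr (b := d + 1 - p.1) (by omega) (by omega)
    (hT.apply_mem_Icc hp).2
  have hne := (pos L (B p)).injective.ne (show p.2 ≠ d + m by omega)
  rw [show colIndex d r m = -(d + m) by unfold colIndex; split_ifs <;> omega, odd_pos, odd_pos]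
  rw [hcol] at hadj
  omega

/-- At the time `B p` the positions of the two indices of the label of `p` are adjacent, so no
other index lies between them. -/
theorem pos_colIndex_lt_pos_colIndex_iff {m : ℤ} (hm : p.2 < m) (hmr : m ≤ r + d - p.1) :
    pos L (B p) (colIndex d r p.2) < pos L (B p) (colIndex d r m) ↔
      ¬pos L (B p) (colIndex d r m) < pos L (B p) (d + 1 - p.1) := by
  have hp' := mem_diagram_Zlam.mp hp
  have hadj := hT.pos_colIndex_apply hp
  have hpm : (p.1, m) ∈ Diagram d (Zlam d r) :=
    mem_diagram_Zlam.mpr ⟨hp'.1, hp'.2.1, by omega, hmr⟩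
  have hrow : pos L (B p) (colIndex d r m) ≠ pos L (B p) (d + 1 - p.1) :=
    (pos L (B p)).injective.ne (colIndex_lt hpm).ne
  have hcol := (pos L (B p)).injective.ne ((colIndex_injOn d r).ne
    (Set.mem_Ici.mpr (by omega)) (Set.mem_Ici.mpr (by omega)) hm.ne)
  omega

theorem setOf_lt_extFilling_eq : {q ∈ ExtHook d (Zlam d r) p.1 p.2 | B p < ExtFilling d B q} =
    hookChoice d r p fun m => pos L (B p) (colIndex d r m) < pos L (B p) (d + 1 - p.1) := by
  ext q
  have hcount (hq : q ∈ ExtHook d (Zlam d r) p.1 p.2) :=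
    hT.lt_extFilling_iff (extHook_subset_extDiagram hp hq) (hT.apply_mem_Icc hp).2
  rw [Set.mem_ofPred_eq, and_congr_right hcount, mem_extHook_Zlam_iff hp]
  simp only [hookChoice, Finset.coe_union, Set.mem_union, Finset.mem_coe, Finset.mem_image,
    Finset.mem_filter, Finset.mem_Ioc]
  constructor
  · rintro ⟨rfl | ⟨m, hm, rfl⟩ | ⟨m, hm, hmr, rfl⟩ | ⟨hc, m, hm, rfl⟩, hlt⟩
    · have := hT.pos_colIndex_apply hp
      omega
    · exact .inl (.inl ⟨m, ⟨hm, hlt⟩, rfl⟩)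
    · rw [pos_legBox_iff hm.1 hmr, hT.pos_colIndex_lt_pos_colIndex_iff hp hm.1 hm.2] at hlt
      exact .inl (.inr ⟨m, ⟨hm, hlt⟩, rfl⟩)
    · exact .inr ⟨m, by rwa [if_pos hc, Finset.mem_Icc], rfl⟩
  · rintro ((⟨m, ⟨hm, hlt⟩, rfl⟩ | ⟨m, ⟨hm, hlt⟩, rfl⟩) | ⟨m, hm, rfl⟩)
    · exact ⟨.inr (.inl ⟨m, hm, rfl⟩), hlt⟩
    · have hmr : ¬(1 ≤ m ∧ m ≤ r) := fun h =>
        hlt (hT.pos_colIndex_lt_of_mem_Icc hp hm.1 h.1 h.2)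
      refine ⟨.inr (.inr (.inl ⟨m, hm, hmr, rfl⟩)), ?_⟩
      rwa [pos_legBox_iff hm.1 hmr, hT.pos_colIndex_lt_pos_colIndex_iff hp hm.1 hm.2]
    · split_ifs at hm with hc
      · rw [Finset.mem_Icc] at hm
        refine ⟨.inr (.inr (.inr ⟨hc, m, hm, rfl⟩)), ?_⟩
        have := hT.pos_neg_lt_of_mem_Icc hp hc hm.1 hm.2
        rwa [show (d + 1 - (d + 1 + p.2) : ℤ) = -p.2 by omega]
      · exact absurd hm (Finset.notMem_empty m)

theorem ncard_lt_extFilling :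
    ({q ∈ ExtHook d (Zlam d r) p.1 p.2 | B p < ExtFilling d B q}.ncard : ℤ) =
      rk d (Zlam d r) p.1 p.2 - 1 := by
  rw [hT.setOf_lt_extFilling_eq hp, Set.ncard_coe_finset, card_hookChoice hp]
  exact fun m => hT.pos_colIndex_lt_of_mem_Icc hp

omit hp in
theorem isBalanced (hB₀ : ∀ p ∉ Diagram d (Zlam d r), B p = 0) :
    IsBalanced d (Zlam d r) B :=
  ⟨⟨hT.length_eq ▸ hT.bijOn, hB₀⟩, fun _ hp => hT.ncard_lt_extFilling hp⟩

end IsReflectionTableau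

end Balancedness

section FinalRuns

variable {d r : ℕ} {lam : ℕ → ℕ} {i t : ℕ}

/-- The number `N + σ_i` of letters before the run `a^λ_{i+1}`. Rows are counted from `0` here:
the letters at indices `t` with `endTime d r lam i ≤ t < endTime d r lam (i + 1)` form the run of
row `i + 1`. -/
def endTime (d r : ℕ) (lam : ℕ → ℕ) (i : ℕ) : ℕ := sizeP d lam + sigmaF d r lam i

theorem sigmaF_succ (d r : ℕ) (lam : ℕ → ℕ) (i : ℕ) :
    sigmaF d r lam (i + 1) = sigmaF d r lam i + muF d r lam (i + 1) :=
  Finset.sum_Icc_succ_top (Nat.le_add_left 1 i) _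

theorem sigmaF_eq_sum_range (d r : ℕ) (lam : ℕ → ℕ) (i : ℕ) :
    sigmaF d r lam i = ∑ k ∈ Finset.range i, muF d r lam (k + 1) := by
  induction i with
  | zero => rfl
  | succ i ih => rw [sigmaF_succ, ih, Finset.sum_range_succ]

theorem endTime_succ (d r : ℕ) (lam : ℕ → ℕ) (i : ℕ) :
    endTime d r lam (i + 1) = endTime d r lam i + muF d r lam (i + 1) := by
  rw [endTime, sigmaF_succ, ← add_assoc, endTime]

theorem endTime_monotone (d r : ℕ) (lam : ℕ → ℕ) : Monotone (endTime d r lam) :=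
  monotone_nat_of_le_succ fun i => by rw [endTime_succ]; exact Nat.le_add_right _ _

theorem endTime_last (hsub : ∀ i, 1 ≤ i → i ≤ d → lam i ≤ Zlam d r i) :
    endTime d r lam d = sizeP d (Zlam d r) := by
  rw [endTime, sizeP, sigmaF, sizeP, ← Finset.sum_add_distrib]
  refine Finset.sum_congr rfl fun i hi => ?_
  rw [Finset.mem_Icc] at hi
  exact Nat.add_sub_cancel' (hsub i hi.1 hi.2)

theorem exists_endTime_le_lt (h₀ : sizeP d lam ≤ t) (ht : t < endTime d r lam d) :
    ∃ i < d, endTime d r lam i ≤ t ∧ t < endTime d r lam (i + 1) := by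
  obtain ⟨i, hi, hle, hlt⟩ := exists_lt_and_not_succ (P := fun i => endTime d r lam i ≤ t) h₀
    (not_le.mpr ht)
  exact ⟨i, hi, hle, not_le.mp hlt⟩

theorem length_flatMap_range {α : Type*} (f : ℕ → List α) (n : ℕ) :
    ((List.range n).flatMap f).length = ∑ k ∈ Finset.range n, (f k).length :=
  List.length_flatMap

theorem getElem?_flatMap_range {α : Type*} (f : ℕ → List α) {n i u : ℕ} (hi : i < n)
    (hu : u < (f i).length) :
    ((List.range n).flatMap f)[∑ k ∈ Finset.range i, (f k).length + u]? = (f i)[u]? := by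
  induction n with
  | zero => omega
  | succ n ih =>
    rw [flatMap_range_succ]
    rcases (Nat.lt_succ_iff.mp hi).eq_or_lt with rfl | hin
    · rw [List.getElem?_append_right (by rw [length_flatMap_range]; omega), length_flatMap_range,
        Nat.add_sub_cancel_left]
    · have hle := Finset.sum_le_sum_of_subset (f := fun k => (f k).length)
        (Finset.range_mono hin)
      rw [Finset.sum_range_succ] at hle
      rw [List.getElem?_append_left (by rw [length_flatMap_range]; omega), ih hin]

theorem length_aLamWord (d r : ℕ) (lam : ℕ → ℕ) :
    (aLamWord d r lam).length = sigmaF d r lam d := by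
  rw [aLamWord, sigmaF_eq_sum_range, length_flatMap_range]
  simp only [List.length_map, List.length_range]

theorem getElem?_aLamWord {u : ℕ} (hi : i < d) (hu : u < muF d r lam (i + 1)) :
    (aLamWord d r lam)[sigmaF d r lam i + u]? =
      some (d + r - (i + 1) - muF d r lam (i + 1) + 1 + u) := by
  have h := getElem?_flatMap_range (fun k => (List.range (muF d r lam (k + 1))).map fun t =>
      d + r - (k + 1) - muF d r lam (k + 1) + 1 + t) hi
      (u := u) (by rwa [List.length_map, List.length_range])
  simp only [List.length_map, List.length_range] at h
  rw [sigmaF_eq_sum_range, aLamWord, h, List.getElem?_map, List.getElem?_range hu, Option.map_some]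

/-- The place of the letter `-(d - i)` after `t` steps, for `t ≥ endTime d r lam i`, of a word for
`w^{(d,r)}` that ends with `a^λ`. The subtraction is truncated: the letter stays at `r + d - i`
once its run is over. -/
def endPos (d r : ℕ) (lam : ℕ → ℕ) (i t : ℕ) : ℤ :=
  r + d - i - (endTime d r lam (i + 1) - t : ℕ)

theorem muF_le (hrow : ∀ i, 1 ≤ i → i ≤ d → d + 1 - i ≤ lam i) (hi : i < d) :
    muF d r lam (i + 1) + i + 1 ≤ r + d := by
  have := hrow (i + 1) (by omega) (by omega)
  unfold muF
  omega

theorem two_le_endPos_succ (hrow : ∀ i, 1 ≤ i → i ≤ d → d + 1 - i ≤ lam i) (hi : i < d)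
    (hle : endTime d r lam i ≤ t) (hlt : t < endTime d r lam (i + 1)) :
    2 ≤ endPos d r lam i (t + 1) := by
  have := muF_le (r := r) hrow hi
  have := endTime_succ d r lam i
  unfold endPos
  omega

theorem endTime_succ_le_of_lt {j : ℕ} (d r : ℕ) (lam : ℕ → ℕ) (hij : i < j) :
    endTime d r lam (i + 1) ≤ endTime d r lam j :=
  endTime_monotone d r lam hij

theorem getElem?_drop_eq_aLamWord_iff {L : List ℕ}
    (hrow : ∀ i, 1 ≤ i → i ≤ d → d + 1 - i ≤ lam i) (hlen : L.length = endTime d r lam d)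
    (hi : i < d) (hle : endTime d r lam i ≤ t) (hlt : t < endTime d r lam (i + 1)) :
    (L.drop (sizeP d lam))[t - sizeP d lam]? = (aLamWord d r lam)[t - sizeP d lam]? ↔
      (L.getD t 0 : ℤ) + 1 = endPos d r lam i (t + 1) := by
  have hmu := muF_le (r := r) hrow hi
  have hsucc := endTime_succ d r lam i
  have hL : t < L.length := hlt.trans_le (hlen ▸ endTime_succ_le_of_lt d r lam hi)
  obtain ⟨u, rfl⟩ := Nat.exists_eq_add_of_le hle
  have hidx : endTime d r lam i + u - sizeP d lam = sigmaF d r lam i + u := by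
    rw [endTime]; omega
  have hidx' : sizeP d lam + (sigmaF d r lam i + u) = endTime d r lam i + u := by
    rw [endTime, add_assoc]
  rw [hidx, List.getElem?_drop, hidx', getElem?_aLamWord hi (by omega),
    List.getElem?_eq_getElem hL, Option.some_inj, List.getD_eq_getElem _ _ hL, endPos]
  omega

theorem drop_eq_aLamWord_iff {L : List ℕ} (hrow : ∀ i, 1 ≤ i → i ≤ d → d + 1 - i ≤ lam i)
    (hlen : L.length = endTime d r lam d) :
    L.drop (sizeP d lam) = aLamWord d r lam ↔
      ∀ i < d, ∀ t, endTime d r lam i ≤ t → t < endTime d r lam (i + 1) →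
        (L.getD t 0 : ℤ) + 1 = endPos d r lam i (t + 1) := by
  refine ⟨fun h i hi t hle hlt => ?_, fun h => List.ext_getElem? fun j => ?_⟩
  · rw [← getElem?_drop_eq_aLamWord_iff hrow hlen hi hle hlt, h]
  · rcases lt_or_ge j (sigmaF d r lam d) with hj | hj
    · obtain ⟨i, hi, hle, hlt⟩ := exists_endTime_le_lt (Nat.le_add_right (sizeP d lam) j)
        (Nat.add_lt_add_left hj (sizeP d lam))
      have hj' := (getElem?_drop_eq_aLamWord_iff hrow hlen hi hle hlt).mpr (h i hi _ hle hlt)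
      rwa [Nat.add_sub_cancel_left] at hj'
    · rw [List.getElem?_eq_none (by rw [List.length_drop, hlen, endTime]; omega),
        List.getElem?_eq_none (by rwa [length_aLamWord])]

theorem mem_BSRestricted_iff {T : ℤ × ℤ → ℕ} : T ∈ BSRestricted d r lam ↔
    IsBalanced d (Zlam d r) T ∧ ∀ i < d, ∀ t, endTime d r lam i ≤ t →
      t < endTime d r lam (i + 1) → ∃ c, ((i : ℤ) + 1, c) ∈ Diagram d (Zlam d r) ∧
        T (i + 1, c) = t + 1 := by
  refine and_congr_right fun _ => ⟨fun h i hi t hle hlt => ?_, fun h i h₁ hi k hle hlt => ?_⟩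
  · exact_mod_cast h (i + 1) (by omega) hi (t + 1) (Nat.succ_le_succ hle) hlt
  · obtain ⟨i, rfl⟩ := Nat.exists_eq_add_of_le' h₁
    obtain ⟨t, rfl⟩ := Nat.exists_eq_add_of_le' (show 1 ≤ k by omega)
    exact_mod_cast h i hi t (Nat.succ_le_succ_iff.mp hle) hlt

/-- The letters `-(d - i)` with `endTime d r lam i ≤ t` are placed after `t` steps as they are for
a word ending with `a^λ`. -/
def AgreesAt (d r : ℕ) (lam : ℕ → ℕ) (L : List ℕ) (t : ℕ) : Prop :=
  ∀ i < d, endTime d r lam i ≤ t → pos L t (i - d) = endPos d r lam i t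

namespace IsReflectionTableau

variable {L : List ℕ} {B : ℤ × ℤ → ℕ} (hT : IsReflectionTableau d r L B)
include hT

theorem length_eq_endTime (hsub : ∀ i, 1 ≤ i → i ≤ d → lam i ≤ Zlam d r i) :
    L.length = endTime d r lam d := by
  rw [hT.length_eq, endTime_last hsub]

theorem agreesAt_length (hsub : ∀ i, 1 ≤ i → i ≤ d → lam i ≤ Zlam d r i) :
    AgreesAt d r lam L L.length := by
  intro i hi _
  have hle := endTime_succ_le_of_lt d r lam hi
  rw [← hT.length_eq_endTime hsub] at hle
  rw [← neg_sub, odd_pos, hT.pos_length_of_le (by omega) (by omega), endPos]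
  omega

end IsReflectionTableau

theorem AgreesAt.pred {L : List ℕ} (hrow : ∀ i, 1 ≤ i → i ≤ d → d + 1 - i ≤ lam i)
    (ht : t < L.length) (h : AgreesAt d r lam L (t + 1)) (hi : i < d)
    (hle : endTime d r lam i ≤ t) (hlt : t < endTime d r lam (i + 1))
    (ha : (L.getD t 0 : ℤ) + 1 = endPos d r lam i (t + 1)) : AgreesAt d r lam L t := by
  intro j hj hjt
  have hpos := two_le_endPos_succ (r := r) hrow hi hle hlt
  rw [pos_eq_sB_pos_succ ht, h j hj (by omega), sB_apply_of_ne_zero (by omega)]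
  rcases lt_trichotomy j i with hji | rfl | hij
  · have := endTime_succ_le_of_lt d r lam hji
    unfold endPos at *
    split_ifs <;> omega
  · unfold endPos at *
    split_ifs <;> omega
  · have := endTime_succ_le_of_lt d r lam hij
    omega

namespace IsReflectionTableau

variable {L : List ℕ} {B : ℤ × ℤ → ℕ} (hT : IsReflectionTableau d r L B)
include hT

theorem row_eq_of_getD_eq_endPos (hrow : ∀ i, 1 ≤ i → i ≤ d → d + 1 - i ≤ lam i)
    (h : AgreesAt d r lam L (t + 1)) (hi : i < d) (hle : endTime d r lam i ≤ t)
    (hlt : t < endTime d r lam (i + 1)) (ha : (L.getD t 0 : ℤ) + 1 = endPos d r lam i (t + 1))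
    {k c : ℤ} (hp : (k, c) ∈ Diagram d (Zlam d r)) (hBp : B (k, c) = t + 1) : k = i + 1 := by
  have hpos := two_le_endPos_succ (r := r) hrow hi hle hlt
  have hi' := h i hi (by omega)
  have hk := mem_diagram_Zlam.mp hp
  rcases hT.pos_apply_eq hp hBp with ⟨hx, hy⟩ | ⟨hx, -⟩
  · exfalso
    have hc : colIndex d r c = i - d := (pos L (t + 1)).injective (by rw [hi', ← ha, hy])
    have hci : c = i - d := by
      unfold colIndex at hc
      split_ifs at hc <;> omega
    obtain ⟨j, rfl⟩ : ∃ j : ℕ, k = j + 1 := ⟨(k - 1).toNat, by omega⟩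
    have hji := endTime_succ_le_of_lt d r lam (show j < i by omega)
    have hjt := endTime_succ d r lam j
    have hj := h j (by omega) (by omega)
    rw [← neg_sub, odd_pos, endPos] at hj
    rw [add_sub_add_right_eq_sub] at hx
    omega
  · have : (d : ℤ) + 1 - k = -(i - d) := (pos L (t + 1)).injective (by rw [odd_pos, hi', ← ha, hx])
    omega

theorem getD_eq_endPos_iff (hrow : ∀ i, 1 ≤ i → i ≤ d → d + 1 - i ≤ lam i)
    (ht : t < L.length) (h : AgreesAt d r lam L (t + 1)) (hi : i < d)
    (hle : endTime d r lam i ≤ t) (hlt : t < endTime d r lam (i + 1)) :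
    (L.getD t 0 : ℤ) + 1 = endPos d r lam i (t + 1) ↔
      ∃ c, ((i : ℤ) + 1, c) ∈ Diagram d (Zlam d r) ∧ B (i + 1, c) = t + 1 := by
  constructor
  · intro ha
    obtain ⟨⟨k, c⟩, hp, hBp⟩ := hT.exists_apply_eq ht
    obtain rfl := hT.row_eq_of_getD_eq_endPos hrow h hi hle hlt ha hp hBp
    exact ⟨c, hp, hBp⟩
  · rintro ⟨c, hp, hBp⟩
    have hpos := two_le_endPos_succ (r := r) hrow hi hle hlt
    have hx : pos L (t + 1) (d + 1 - (i + 1)) = -endPos d r lam i (t + 1) := by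
      rw [← h i hi (by omega), ← odd_pos, neg_sub, add_sub_add_right_eq_sub]
    rcases hT.pos_apply_eq hp hBp with ⟨h₁, -⟩ | ⟨h₁, -⟩ <;> rw [hx] at h₁ <;> omega

theorem agreesAt_of_forall (hrow : ∀ i, 1 ≤ i → i ≤ d → d + 1 - i ≤ lam i)
    (hsub : ∀ i, 1 ≤ i → i ≤ d → lam i ≤ Zlam d r i)
    (h : ∀ i < d, ∀ t, endTime d r lam i ≤ t → t < endTime d r lam (i + 1) →
      AgreesAt d r lam L (t + 1) → (L.getD t 0 : ℤ) + 1 = endPos d r lam i (t + 1))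
    (s : ℕ) (hs : sizeP d lam ≤ s) (hsL : s ≤ L.length) : AgreesAt d r lam L s := by
  refine Nat.decreasingInduction' (fun t htL hst hA => ?_) hsL (hT.agreesAt_length hsub)
  obtain ⟨i, hi, hle, hlt⟩ := exists_endTime_le_lt (hs.trans hst)
    (hT.length_eq_endTime hsub ▸ htL)
  exact hA.pred hrow htL hi hle hlt (h i hi t hle hlt hA)

theorem mem_BSRestricted_iff_drop_eq (hrow : ∀ i, 1 ≤ i → i ≤ d → d + 1 - i ≤ lam i)
    (hsub : ∀ i, 1 ≤ i → i ≤ d → lam i ≤ Zlam d r i)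
    (hB₀ : ∀ p ∉ Diagram d (Zlam d r), B p = 0) :
    B ∈ BSRestricted d r lam ↔ L.drop (sizeP d lam) = aLamWord d r lam := by
  have hlen := hT.length_eq_endTime hsub
  have hlt_length {i t : ℕ} (hi : i < d) (hlt : t < endTime d r lam (i + 1)) : t < L.length :=
    hlt.trans_le (hlen ▸ endTime_succ_le_of_lt d r lam hi)
  have hmem {i t : ℕ} (hi : i < d) (hle : endTime d r lam i ≤ t)
      (hlt : t < endTime d r lam (i + 1)) (hA : AgreesAt d r lam L (t + 1)) :=
    hT.getD_eq_endPos_iff hrow (hlt_length hi hlt) hA hi hle hlt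
  have hN {i t : ℕ} (hle : endTime d r lam i ≤ t) : sizeP d lam ≤ t + 1 :=
    ((endTime_monotone d r lam i.zero_le).trans hle).trans t.le_succ
  rw [mem_BSRestricted_iff, drop_eq_aLamWord_iff hrow hlen]
  constructor
  · rintro ⟨-, h⟩ i hi t hle hlt
    have hA := hT.agreesAt_of_forall hrow hsub
      fun i hi t hle hlt hA => (hmem hi hle hlt hA).mpr (h i hi t hle hlt)
    exact (hmem hi hle hlt (hA _ (hN hle) (hlt_length hi hlt))).mpr (h i hi t hle hlt)
  · intro h
    refine ⟨hT.isBalanced hB₀, fun i hi t hle hlt => ?_⟩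
    have hA := hT.agreesAt_of_forall hrow hsub fun i hi t hle hlt _ => h i hi t hle hlt
    exact (hmem hi hle hlt (hA _ (hN hle) (hlt_length hi hlt))).mp (h i hi t hle hlt)

end IsReflectionTableau

end FinalRuns

theorem IsStrictPartition.le_apply {d : ℕ} {lam : ℕ → ℕ} (h : IsStrictPartition d lam) {i : ℕ}
    (h₁ : 1 ≤ i) (hi : i ≤ d) : d + 1 - i ≤ lam i := by
  induction hi using Nat.decreasingInduction with
  | self => exact (Nat.add_sub_cancel_left d 1).trans_le h.2
  | of_succ k hk ih =>
    have := h.1 k h₁ hk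
    have := ih (by omega)
    omega

theorem restricted_iff_ends_with_aLam_general (d r : ℕ) (lam : ℕ → ℕ)
    (hrow : ∀ i : ℕ, 1 ≤ i → i ≤ d → d + 1 - i ≤ lam i)
    (hsub : ∀ i : ℕ, 1 ≤ i → i ≤ d → lam i ≤ Zlam d r i)
    (w : Equiv.Perm ℤ) (hw : IsWdr d r w)
    (L : List ℕ) (hL : IsReducedWord (d + r) w L)
    (B : ℤ × ℤ → ℕ)
    (hB0 : ∀ p : ℤ × ℤ, p ∉ Diagram d (Zlam d r) → B p = 0)
    (hB : ∀ p ∈ Diagram d (Zlam d r),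
      1 ≤ B p ∧ B p ≤ sizeP d (Zlam d r) ∧ reflOrder L (B p - 1) = fLabel d r p) :
    B ∈ BSRestricted d r lam ↔ L.drop (sizeP d lam) = aLamWord d r lam :=
  (hL.isReflectionTableau hw hB).mem_BSRestricted_iff_drop_eq hrow hsub hB0

/-- the balanced tableau `B_a` associated to a reduced word
`a ∈ Red(w^{(d,r)})` lies in `BS(Z(d,r))|_λ` if and only if the ending segment
`(a_{N+1}, …, a_ℓ)` equals `a^λ`. -/
theorem restricted_iff_ends_with_aLam (d r : ℕ) (hd : 1 ≤ d)
    (lam : ℕ → ℕ) (hlam : IsStrictPartition d lam)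
    (hsub : ∀ i : ℕ, 1 ≤ i → i ≤ d → lam i ≤ Zlam d r i)
    (w : Equiv.Perm ℤ) (hw : IsWdr d r w)
    (L : List ℕ) (hL : IsReducedWord (d + r) w L)
    (B : ℤ × ℤ → ℕ)
    (hB0 : ∀ p : ℤ × ℤ, p ∉ Diagram d (Zlam d r) → B p = 0)
    (hB : ∀ p ∈ Diagram d (Zlam d r),
      1 ≤ B p ∧ B p ≤ sizeP d (Zlam d r) ∧ reflOrder L (B p - 1) = fLabel d r p) :
    B ∈ BSRestricted d r lam ↔ L.drop (sizeP d lam) = aLamWord d r lam :=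
  restricted_iff_ends_with_aLam_general d r lam (fun _ => hlam.le_apply) hsub w hw L hL B hB0 hB

end BST
end
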